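/- arXiv:2003.10389 — 3 statements merged into one kernel-verified Lean document; each statement's English description precedes it below -/
import Mathlib

section
/- Let δ>0 with δ≠2. For every continuous function φ:[0,1]→ℝ and every C² function h:[0,1]→ℝ with compact support contained in (0,1), the following integration by parts formula holds: ∫₀¹ φ(r)h(r) dr = −∫₀¹∫₀¹ φ(s) h''(r) G_δ(s,r) dr ds + (1/(4(δ−2))) ∫₀¹∫₀¹ φ(s) h(r) (∫₀^∞ b^{δ−1} (d³/db³)Σ^δ_{r,s}(b) db) dr ds. -/
open MeasureTheory Real Filter

/-- Ascending Pochhammer symbol `(a)_k = a(a+1)⋯(a+k-1)`. -/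
noncomputable def poch (a : ℝ) (k : ℕ) : ℝ := ∏ i ∈ Finset.range k, (a + i)

/-- Gauss hypergeometric function `₂F₁(a,b,c,z) = ∑ (a)_k (b)_k / (k! (c)_k) z^k`. -/
noncomputable def hyp2F1 (a b c z : ℝ) : ℝ :=
  ∑' k : ℕ, (poch a k * poch b k) / ((Nat.factorial k : ℝ) * poch c k) * z ^ k

/-- `K(δ) = 2 Γ((δ+1)/2)² / Γ(δ/2)²`. -/
noncomputable def Kcoef (δ : ℝ) : ℝ :=
  2 * Real.Gamma ((δ + 1) / 2) ^ 2 / Real.Gamma (δ / 2) ^ 2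

/-- Two-point kernel `G_δ(s,r)`, equal to the second moment `E^δ[X_s X_r]` of a
δ-dimensional Bessel bridge from 0 to 0 over [0,1]. -/
noncomputable def twoPt (δ s r : ℝ) : ℝ :=
  if s < r then
    Kcoef δ * (r - s) ^ (δ / 2 + 1) * (s * (1 - r)) ^ ((1 : ℝ) / 2) *
      (r * (1 - s)) ^ (-((δ + 1) / 2)) *
      hyp2F1 ((δ + 1) / 2) ((δ + 1) / 2) (δ / 2) (s * (1 - r) / (r * (1 - s)))
  else
    Kcoef δ * (s - r) ^ (δ / 2 + 1) * (r * (1 - s)) ^ ((1 : ℝ) / 2) *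
      (s * (1 - r)) ^ (-((δ + 1) / 2)) *
      hyp2F1 ((δ + 1) / 2) ((δ + 1) / 2) (δ / 2) (r * (1 - s) / (s * (1 - r)))

/-- Coefficient `D(s,r)`. -/
noncomputable def Dcoef (s r : ℝ) : ℝ :=
  if s < r then (1 - s) / ((r - s) * (1 - r)) else s / (r * (s - r))

/-- Coefficient `C_k = Γ(k+(δ+1)/2)/(Γ(δ/2) Γ(k+δ/2) k!)`. -/
noncomputable def Ccoef (δ : ℝ) (k : ℕ) : ℝ :=
  Real.Gamma ((k : ℝ) + (δ + 1) / 2) /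
    (Real.Gamma (δ / 2) * Real.Gamma ((k : ℝ) + δ / 2) * (Nat.factorial k : ℝ))

/-- Coefficient `f_k(s,r)`. -/
noncomputable def fcoef (s r : ℝ) (k : ℕ) : ℝ :=
  if s < r then (2 * (r - s)) ^ ((1 : ℝ) / 2 - (k : ℝ)) * (s / r) ^ ((k : ℝ) + 1 / 2)
  else (2 * (s - r)) ^ ((1 : ℝ) / 2 - (k : ℝ)) * ((1 - s) / (1 - r)) ^ ((k : ℝ) + 1 / 2)

/-- `Σ^δ_{r,s}(b) = Σ^δ_r(X_s | b)`, the density-weighted conditional expectation of a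
δ-dimensional Bessel bridge. -/
noncomputable def SigmaRS (δ r s b : ℝ) : ℝ :=
  ((2 : ℝ) ^ (δ / 2 - 1) * (r * (1 - r)) ^ (δ / 2))⁻¹ *
    Real.exp (-(Dcoef s r) * b ^ 2 / 2) *
    ∑' k : ℕ, Ccoef δ k * fcoef s r k * b ^ (2 * k)

lemma poch_zero (a : ℝ) : poch a 0 = 1 := by simp [poch]

lemma poch_succ (a : ℝ) (k : ℕ) : poch a (k + 1) = poch a k * (a + k) := by
  simp [poch, Finset.prod_range_succ]

lemma poch_succ' (a : ℝ) (k : ℕ) : poch a (k + 1) = a * poch (a + 1) k := by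
  unfold poch
  rw [Finset.prod_range_succ', mul_comm]
  simp only [Nat.cast_zero, add_zero]
  congr 1
  refine Finset.prod_congr rfl fun i _ => ?_
  push_cast; ring

lemma poch_pos {a : ℝ} (ha : 0 < a) (k : ℕ) : 0 < poch a k :=
  Finset.prod_pos fun i _ => by positivity

lemma Gamma_nat_add_eq {a : ℝ} (ha : 0 < a) (k : ℕ) :
    Real.Gamma ((k : ℝ) + a) = Real.Gamma a * poch a k := by
  induction k with
  | zero => simp [poch_zero]
  | succ k ih =>
    have : ((k + 1 : ℕ) : ℝ) + a = ((k : ℝ) + a) + 1 := by push_cast; ring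
    rw [this, Real.Gamma_add_one (by positivity), ih, poch_succ]; ring

/-- hypergeometric coefficient -/
noncomputable def hc (a b c : ℝ) (k : ℕ) : ℝ :=
  (poch a k * poch b k) / ((Nat.factorial k : ℝ) * poch c k)

lemma hyp_eq (a b c z : ℝ) : hyp2F1 a b c z = ∑' k : ℕ, hc a b c k * z ^ k := rfl

lemma hc_zero (a b c : ℝ) : hc a b c 0 = 1 := by simp [hc, poch_zero]

lemma hc_succ {a b c : ℝ} (hc0 : 0 < c) (k : ℕ) :
    hc a b c (k + 1) = hc a b c k * ((a + k) * (b + k) / ((k + 1) * (c + k))) := by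
  have := poch_pos hc0 k
  unfold hc
  rw [poch_succ, poch_succ, poch_succ, Nat.factorial_succ]
  push_cast
  field_simp

lemma hc_succ' {a b c : ℝ} (hc0 : 0 < c) (k : ℕ) :
    ((k : ℝ) + 1) * hc a b c (k + 1) = a * b / c * hc (a + 1) (b + 1) (c + 1) k := by
  have := poch_pos (by linarith : (0:ℝ) < c + 1) k
  unfold hc
  rw [poch_succ', poch_succ', poch_succ', Nat.factorial_succ]
  push_cast
  field_simp

lemma hc_tendsto_ratio {a b c : ℝ} :
    Tendsto (fun k : ℕ => |(a + k) * (b + k) / ((k + 1) * (c + k))|) atTop (nhds 1) := by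
  have h0 : Tendsto (fun k : ℕ => ((k : ℝ))⁻¹) atTop (nhds 0) :=
    tendsto_inv_atTop_zero.comp tendsto_natCast_atTop_atTop
  have h : Tendsto (fun k : ℕ => |(a * (k:ℝ)⁻¹ + 1) * (b * (k:ℝ)⁻¹ + 1) /
      ((1 + 1 * (k:ℝ)⁻¹) * (c * (k:ℝ)⁻¹ + 1))|) atTop
      (nhds |(a * 0 + 1) * (b * 0 + 1) / ((1 + 1 * 0) * (c * 0 + 1))|) := by
    refine Tendsto.abs (Tendsto.div ?_ ?_ (by simp))
    · exact ((h0.const_mul a).add_const 1).mul ((h0.const_mul b).add_const 1)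
    · exact ((h0.const_mul 1).const_add 1).mul ((h0.const_mul c).add_const 1)
  have e : |(a * 0 + 1) * (b * 0 + 1) / ((1 + 1 * 0) * (c * 0 + 1))| = (1:ℝ) := by simp
  rw [e] at h
  refine h.congr' ?_
  filter_upwards [eventually_gt_atTop 0] with k hk
  have hk' : (0:ℝ) < k := by exact_mod_cast hk
  congr 1
  have e1 : a + k = k * (a * (k:ℝ)⁻¹ + 1) := by field_simp
  have e2 : b + k = k * (b * (k:ℝ)⁻¹ + 1) := by field_simp
  have e3 : c + k = k * (c * (k:ℝ)⁻¹ + 1) := by field_simp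
  have e4 : (k:ℝ) + 1 = k * (1 + 1 * (k:ℝ)⁻¹) := by field_simp
  rw [e1, e2, e3, e4]
  rw [show (k:ℝ) * (a * (k:ℝ)⁻¹ + 1) * (k * (b * (k:ℝ)⁻¹ + 1)) =
    (k * k) * ((a * (k:ℝ)⁻¹ + 1) * (b * (k:ℝ)⁻¹ + 1)) by ring,
    show (k:ℝ) * (1 + 1 * (k:ℝ)⁻¹) * (k * (c * (k:ℝ)⁻¹ + 1)) =
    (k * k) * ((1 + 1 * (k:ℝ)⁻¹) * (c * (k:ℝ)⁻¹ + 1)) by ring,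
    mul_div_mul_left _ _ (by positivity)]

lemma hc_summable {a b c z : ℝ} (hc0 : 0 < c) (hz : |z| < 1) :
    Summable (fun k => hc a b c k * z ^ k) := by
  obtain ⟨ρ, h1, h2⟩ := exists_between hz
  refine summable_of_ratio_norm_eventually_le h2 ?_
  have := (hc_tendsto_ratio (a := a) (b := b) (c := c)).mul_const |z|
  rw [one_mul] at this
  filter_upwards [this.eventually_le_const h1] with k hk
  rw [hc_succ hc0, pow_succ]
  rw [show hc a b c k * ((a + k) * (b + k) / ((k + 1) * (c + k))) * (z ^ k * z) =
    ((a + k) * (b + k) / ((k + 1) * (c + k)) * z) * (hc a b c k * z ^ k) by ring, norm_mul]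
  refine mul_le_mul_of_nonneg_right ?_ (norm_nonneg _)
  rw [Real.norm_eq_abs, abs_mul]; exact hk

/-- differentiation of power series -/
lemma ps_hasDerivAt {p : ℕ → ℝ} {R : ℝ} (hR : ∀ x, |x| < R → Summable (fun k => p k * x ^ k))
    {z : ℝ} (hz : |z| < R) :
    HasDerivAt (fun x => ∑' k, p k * x ^ k) (∑' k : ℕ, ((k : ℝ) + 1) * p (k + 1) * z ^ k) z := by
  obtain ⟨ρ, h1, h2⟩ := exists_between hz
  obtain ⟨ρ', h3, h4⟩ := exists_between h2
  have hρ0 : 0 < ρ := lt_of_le_of_lt (abs_nonneg z) h1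
  have hρ0' : 0 < ρ' := hρ0.trans h3
  have hb : Summable (fun k : ℕ => (k : ℝ) * |p k| * ρ ^ (k - 1)) := by
    have hs := hR ρ' (by rwa [abs_of_pos hρ0'])
    obtain ⟨M, hM⟩ := hs.tendsto_atTop_zero.norm.bddAbove_range
    have hg := summable_pow_mul_geometric_of_norm_lt_one (R := ℝ) 1 (r := ρ / ρ')
      (by rw [Real.norm_eq_abs, abs_of_pos (by positivity)]; exact (div_lt_one hρ0').2 h3)
    refine Summable.of_nonneg_of_le (fun k => by positivity) (fun k => ?_) (hg.mul_left (M / ρ))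
    have hMk : |p k| * ρ' ^ k ≤ M := by
      have := hM ⟨k, rfl⟩
      simpa [abs_mul, abs_of_pos hρ0'] using this
    rcases Nat.eq_zero_or_pos k with rfl | hk
    · simp
    · have e : ρ ^ k = ρ ^ (k - 1) * ρ := by rw [← pow_succ, Nat.sub_add_cancel hk]
      have : (k:ℝ) * |p k| * ρ ^ (k - 1) = (|p k| * ρ' ^ k) / ρ * ((k:ℝ) ^ 1 * (ρ / ρ') ^ k) := by
        rw [div_pow, e]; field_simp
      rw [this]
      gcongr
  have key := hasDerivAt_tsum_of_isPreconnected (g := fun k x => p k * x ^ k)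
    (g' := fun k x => p k * (k * x ^ (k - 1))) (t := Metric.ball (0:ℝ) ρ) (y₀ := 0) (y := z) hb
    Metric.isOpen_ball (convex_ball _ _).isPreconnected
    (fun n y _ => (hasDerivAt_pow n y).const_mul (p n))
    (fun n y hy => by
      have hy' : |y| ≤ ρ := by simpa using (Metric.mem_ball.1 hy).le
      rw [Real.norm_eq_abs, abs_mul, abs_mul, abs_pow, Nat.abs_cast]
      have : |y| ^ (n - 1) ≤ ρ ^ (n - 1) := pow_le_pow_left₀ (abs_nonneg _) hy' _
      calc |p n| * (n * |y| ^ (n - 1)) ≤ |p n| * (n * ρ ^ (n - 1)) := by gcongr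
        _ = _ := by ring)
    (Metric.mem_ball_self hρ0) (hR 0 (by simpa using hρ0.trans h2)) (by simpa using h1)
  have hsum : Summable (fun k : ℕ => p k * (k * z ^ (k - 1))) := by
    refine Summable.of_norm_bounded hb fun n => ?_
    rw [Real.norm_eq_abs, abs_mul, abs_mul, abs_pow, Nat.abs_cast]
    have : |z| ^ (n - 1) ≤ ρ ^ (n - 1) := pow_le_pow_left₀ (abs_nonneg _) h1.le _
    calc |p n| * (n * |z| ^ (n - 1)) ≤ |p n| * (n * ρ ^ (n - 1)) := by gcongr
      _ = _ := by ring
  refine key.congr_deriv ?_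
  rw [hsum.tsum_eq_zero_add]
  simp only [Nat.cast_zero, zero_mul, mul_zero, zero_add]
  refine tsum_congr fun k => ?_
  push_cast
  ring

lemma ps_analytic {p : ℕ → ℝ} (hR : ∀ x, |x| < 1 → Summable (fun k => p k * x ^ k)) :
    AnalyticOnNhd ℝ (fun x => ∑' k, p k * x ^ k) (Metric.ball 0 1) := by
  have hrad : (1 : ENNReal) ≤ (FormalMultilinearSeries.ofScalars ℝ p).radius := by
    refine le_of_forall_lt fun r hr => ?_
    obtain ⟨ρ, h1, h2⟩ := ENNReal.lt_iff_exists_nnreal_btwn.1 hr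
    refine lt_of_lt_of_le h1 ?_
    apply FormalMultilinearSeries.le_radius_of_summable_norm
    have h2' : (ρ:ℝ) < 1 := by exact_mod_cast h2
    have := (hR ρ (by rw [abs_of_nonneg ρ.coe_nonneg]; exact h2')).norm
    simpa [FormalMultilinearSeries.ofScalars_norm, abs_mul] using this
  have h := (FormalMultilinearSeries.ofScalars ℝ p).hasFPowerSeriesOnBall
    (lt_of_lt_of_le one_pos hrad)
  have h2 := (h.mono one_pos hrad).analyticOnNhd
  have e : (FormalMultilinearSeries.ofScalars ℝ p).sum = fun x => ∑' k, p k * x ^ k := by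
    ext x
    rw [FormalMultilinearSeries.sum]
    refine tsum_congr fun k => ?_
    simp [mul_comm]
  rw [e] at h2
  intro x hx
  apply h2
  rw [← ENNReal.ofReal_one, Metric.eball_ofReal]
  exact hx

lemma hyp_hasDerivAt {a b c z : ℝ} (hc0 : 0 < c) (hz : |z| < 1) :
    HasDerivAt (hyp2F1 a b c) (a * b / c * hyp2F1 (a + 1) (b + 1) (c + 1) z) z := by
  have := ps_hasDerivAt (p := hc a b c) (R := 1) (fun x hx => hc_summable hc0 hx) hz
  refine HasDerivAt.congr_deriv (f := hyp2F1 a b c) this ?_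
  rw [hyp_eq, ← tsum_mul_left]
  refine tsum_congr fun k => ?_
  rw [hc_succ' hc0]; ring

lemma hyp_analytic (a b : ℝ) {c : ℝ} (hc0 : 0 < c) :
    AnalyticOnNhd ℝ (hyp2F1 a b c) (Metric.ball 0 1) :=
  ps_analytic (fun _ hx => hc_summable hc0 hx)

lemma hyp_zero (a b c : ℝ) : hyp2F1 a b c 0 = 1 := by
  rw [hyp_eq, tsum_eq_single 0]
  · simp [hc_zero]
  · intro k hk; simp [hk]

lemma hasSum_shift {f : ℕ → ℝ} {x : ℝ} (h : HasSum (fun k => f (k + 1)) x) (h0 : f 0 = 0) :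
    HasSum f x := by
  have := (hasSum_nat_add_iff (f := f) (g := x) 1).1 h
  simpa [h0] using this

lemma hyp_ode {a b c z : ℝ} (hc0 : 0 < c) (hz : |z| < 1) :
    z * (1 - z) * (a * b / c * ((a + 1) * (b + 1) / (c + 1) *
      hyp2F1 (a + 1 + 1) (b + 1 + 1) (c + 1 + 1) z)) +
    (c - (a + b + 1) * z) * (a * b / c * hyp2F1 (a + 1) (b + 1) (c + 1) z) -
    a * b * hyp2F1 a b c z = 0 := by
  have hc1 : 0 < c + 1 := by linarith
  have hc2 : 0 < c + 1 + 1 := by linarith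
  set A := hc a b c with hA
  have S0 : HasSum (fun k => A k * z ^ k) (hyp2F1 a b c z) := (hc_summable hc0 hz).hasSum
  have S1 : HasSum (fun k : ℕ => ((k:ℝ) + 1) * A (k + 1) * z ^ k)
      (a * b / c * hyp2F1 (a + 1) (b + 1) (c + 1) z) := by
    have := ((hc_summable (a := a + 1) (b := b + 1) hc1 hz).hasSum).mul_left (a * b / c)
    refine this.congr_fun ?_
    intro k
    rw [hA, hc_succ' hc0]; ring
  have S2 : HasSum (fun k : ℕ => ((k:ℝ) + 1) * ((k:ℝ) + 2) * A (k + 2) * z ^ k)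
      (a * b / c * ((a + 1) * (b + 1) / (c + 1) *
      hyp2F1 (a + 1 + 1) (b + 1 + 1) (c + 1 + 1) z)) := by
    have := (((hc_summable (a := a + 1 + 1) (b := b + 1 + 1) hc2 hz).hasSum).mul_left
      ((a + 1) * (b + 1) / (c + 1))).mul_left (a * b / c)
    refine this.congr_fun ?_
    intro k
    have e1 := hc_succ' (a := a) (b := b) hc0 (k + 1)
    have e2 := hc_succ' (a := a + 1) (b := b + 1) hc1 k
    push_cast at e1
    rw [hA]
    have : ((k:ℝ) + 1) * ((k:ℝ) + 2) * hc a b c (k + 2) =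
      ((k:ℝ) + 1) * (((k:ℝ) + 1 + 1) * hc a b c (k + 1 + 1)) := by ring
    rw [this, e1]
    linear_combination (a * b / c * z ^ k) * e2
  have T1 : HasSum (fun k : ℕ => (k:ℝ) * A k * z ^ k)
      (z * (a * b / c * hyp2F1 (a + 1) (b + 1) (c + 1) z)) := by
    refine hasSum_shift ?_ (by simp)
    refine (S1.mul_left z).congr_fun ?_
    intro k; push_cast; ring
  have T2 : HasSum (fun k : ℕ => (k:ℝ) * ((k:ℝ) + 1) * A (k + 1) * z ^ k)
      (z * (a * b / c * ((a + 1) * (b + 1) / (c + 1) *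
      hyp2F1 (a + 1 + 1) (b + 1 + 1) (c + 1 + 1) z))) := by
    refine hasSum_shift ?_ (by simp)
    refine (S2.mul_left z).congr_fun ?_
    intro k; push_cast; ring
  have T3 : HasSum (fun k : ℕ => (k:ℝ) * ((k:ℝ) - 1) * A k * z ^ k)
      (z * (z * (a * b / c * ((a + 1) * (b + 1) / (c + 1) *
      hyp2F1 (a + 1 + 1) (b + 1 + 1) (c + 1 + 1) z)))) := by
    refine hasSum_shift ?_ (by simp)
    refine (T2.mul_left z).congr_fun ?_
    intro k; push_cast; ring
  have tot := (((T2.sub T3).add (S1.mul_left c)).sub (T1.mul_left (a + b + 1))).sub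
    (S0.mul_left (a * b))
  have zero : HasSum (fun _ : ℕ => (0:ℝ)) 0 := hasSum_zero
  have := tot.unique (zero.congr_fun ?_)
  · linear_combination this
  · intro k
    have e := hc_succ (a := a) (b := b) hc0 k
    have : A (k + 1) * ((k + 1) * (c + k)) = A k * ((a + k) * (b + k)) := by
      rw [hA, e]; field_simp
    linear_combination z ^ k * this

lemma const_of_deriv {f : ℝ → ℝ} {e : ℝ} (hcont : ContinuousOn f (Set.Icc 0 e))
    (hd : ∀ x ∈ Set.Ioo 0 e, HasDerivAt f 0 x) : ∀ x ∈ Set.Icc 0 e, f x = f 0 := by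
  intro x hx
  rcases hx.1.eq_or_lt with h | h
  · rw [h]
  · obtain ⟨y, _, hy⟩ := exists_hasDerivAt_eq_slope f (fun _ => 0) h
      (hcont.mono (Set.Icc_subset_Icc_right hx.2))
      (fun t ht => hd t ⟨ht.1, ht.2.trans_le hx.2⟩)
    have h3 : x - 0 ≠ 0 := by linarith
    rw [eq_div_iff h3] at hy
    linarith

lemma ode_unique {c e q : ℝ} (hc0 : 0 < c) {y₁ d₁ e₁ y₂ d₂ e₂ : ℝ → ℝ}
    (h1 : ∀ x, |x| < 1 → HasDerivAt y₁ (d₁ x) x) (h1' : ∀ x, |x| < 1 → HasDerivAt d₁ (e₁ x) x)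
    (h2 : ∀ x, |x| < 1 → HasDerivAt y₂ (d₂ x) x) (h2' : ∀ x, |x| < 1 → HasDerivAt d₂ (e₂ x) x)
    (o1 : ∀ x, |x| < 1 → x * (1 - x) * e₁ x + (c - e * x) * d₁ x - q * y₁ x = 0)
    (o2 : ∀ x, |x| < 1 → x * (1 - x) * e₂ x + (c - e * x) * d₂ x - q * y₂ x = 0)
    (i1 : y₁ 0 = 1) (i2 : y₂ 0 = 1)
    (a1 : AnalyticOnNhd ℝ y₁ (Metric.ball 0 1)) (a2 : AnalyticOnNhd ℝ y₂ (Metric.ball 0 1)) :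
    Set.EqOn y₁ y₂ (Metric.ball 0 1) := by
  set W : ℝ → ℝ := fun x => y₁ x * d₂ x - d₁ x * y₂ x with hW
  have hWd : ∀ x, |x| < 1 → HasDerivAt W (y₁ x * e₂ x - e₁ x * y₂ x) x := by
    intro x hx
    refine (((h1 x hx).mul (h2' x hx)).sub ((h1' x hx).mul (h2 x hx))).congr_deriv ?_
    ring
  have W0 : ∀ x ∈ Set.Ioo (0:ℝ) (1/2), W x = 0 := by
    intro x hx
    have hxs : ∀ t ∈ Set.Icc (0:ℝ) (1/2), |t| < 1 := by
      intro t ht; rw [abs_of_nonneg ht.1]; linarith [ht.2]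
    have := const_of_deriv (f := fun t => t ^ c * (1 - t) ^ (e - c) * W t) (e := 1/2) ?_ ?_ x
      ⟨hx.1.le, hx.2.le⟩
    · simp only [Real.zero_rpow hc0.ne', zero_mul] at this
      have p1 : x ^ c ≠ 0 := (Real.rpow_pos_of_pos hx.1 _).ne'
      have p2 : (1 - x) ^ (e - c) ≠ 0 := (Real.rpow_pos_of_pos (by linarith [hx.2]) _).ne'
      simpa [p1, p2] using this
    · refine ContinuousOn.mul (ContinuousOn.mul ?_ ?_) ?_
      · exact continuousOn_id.rpow_const (fun _ _ => Or.inr hc0.le)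
      · refine ContinuousOn.rpow_const (by fun_prop) (fun t ht => Or.inl ?_)
        have := ht.2; intro h; linarith
      · intro t ht
        exact (hWd t (hxs t ht)).continuousAt.continuousWithinAt
    · intro t ht
      have ht1 : |t| < 1 := hxs t ⟨ht.1.le, ht.2.le⟩
      have hq : 0 < 1 - t := by linarith [ht.2]
      have r1 := Real.hasDerivAt_rpow_const (x := t) (p := c) (Or.inl ht.1.ne')
      have r2 := ((hasDerivAt_id t).const_sub 1).rpow_const (p := e - c) (Or.inl hq.ne')
      refine ((r1.mul r2).mul (hWd t ht1)).congr_deriv ?_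
      have s1 : t ^ c = t * t ^ (c - 1) := by
        rw [Real.rpow_sub_one ht.1.ne']; field_simp [ht.1.ne']
      have s2 : (1 - t) ^ (e - c) = (1 - t) * (1 - t) ^ (e - c - 1) := by
        rw [Real.rpow_sub_one hq.ne']; field_simp
      have ho : t * (1 - t) * (y₁ t * e₂ t - e₁ t * y₂ t) + (c - e * t) * W t = 0 := by
        rw [hW]
        linear_combination y₁ t * o2 t ht1 - y₂ t * o1 t ht1
      simp only [id, Pi.mul_apply]
      rw [s1, s2]
      linear_combination t ^ (c - 1) * (1 - t) ^ (e - c - 1) * ho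
  have hne : ∀ᶠ x in nhds (0:ℝ), y₁ x ≠ 0 :=
    (h1 0 (by simp)).continuousAt.eventually_ne (by rw [i1]; norm_num)
  obtain ⟨η, hη, hη2⟩ := Metric.eventually_nhds_iff.1 hne
  set ε := min (η / 2) (1 / 4) with hε
  have hε0 : 0 < ε := by positivity
  have hε1 : ε ≤ 1 / 4 := min_le_right _ _
  have hε2 : ε < η := (min_le_left _ _).trans_lt (by linarith)
  have hlt : ∀ t ∈ Set.Icc (0:ℝ) ε, |t| < 1 := by
    intro t ht; rw [abs_of_nonneg ht.1]; linarith [ht.2]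
  have hy1 : ∀ t ∈ Set.Icc (0:ℝ) ε, y₁ t ≠ 0 := by
    intro t ht; apply hη2; simp [abs_of_nonneg ht.1]; linarith [ht.2]
  have eqs : ∀ x ∈ Set.Icc 0 ε, y₁ x = y₂ x := by
    intro x hx
    have := const_of_deriv (f := fun t => y₂ t / y₁ t) (e := ε) ?_ ?_ x hx
    · simp only [i1, i2, div_one] at this
      rw [div_eq_one_iff_eq (hy1 x hx)] at this
      exact this.symm
    · intro t ht
      exact ((h2 t (hlt t ht)).continuousAt.div (h1 t (hlt t ht)).continuousAt
        (hy1 t ht)).continuousWithinAt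
    · intro t ht
      have ht' : t ∈ Set.Icc 0 ε := ⟨ht.1.le, ht.2.le⟩
      refine ((h2 t (hlt t ht')).div (h1 t (hlt t ht')) (hy1 t ht')).congr_deriv ?_
      have := W0 t ⟨ht.1, by linarith [ht.2]⟩
      rw [hW] at this
      rw [show d₂ t * y₁ t - y₂ t * d₁ t = 0 by linear_combination this, zero_div]
  refine a1.eqOn_of_preconnected_of_frequently_eq a2 (convex_ball _ _).isPreconnected
    (Metric.mem_ball_self one_pos) ?_
  have hfr : ∃ᶠ z in nhdsWithin (0:ℝ) (Set.Ioi 0), y₁ z = y₂ z := by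
    refine Eventually.frequently ?_
    filter_upwards [Ioo_mem_nhdsGT hε0] with t ht
    exact eqs t ⟨ht.1.le, ht.2.le⟩
  exact hfr.filter_mono (nhdsWithin_mono _ (fun x hx => ne_of_gt hx))

/-- Euler's transformation. -/
lemma euler {a b c z : ℝ} (hc0 : 0 < c) (hz : |z| < 1) :
    hyp2F1 a b c z = (1 - z) ^ (c - a - b) * hyp2F1 (c - a) (c - b) c z := by
  set p := c - a - b with hp
  have hc1 : 0 < c + 1 := by linarith
  set a' := c - a
  set b' := c - b
  set v0 : ℝ → ℝ := hyp2F1 a' b' c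
  set v1 : ℝ → ℝ := fun z => a' * b' / c * hyp2F1 (a' + 1) (b' + 1) (c + 1) z with hv1
  set v2 : ℝ → ℝ := fun z => a' * b' / c * ((a' + 1) * (b' + 1) / (c + 1) *
      hyp2F1 (a' + 1 + 1) (b' + 1 + 1) (c + 1 + 1) z) with hv2
  have dv0 : ∀ x, |x| < 1 → HasDerivAt v0 (v1 x) x := fun x hx => hyp_hasDerivAt hc0 hx
  have dv1 : ∀ x, |x| < 1 → HasDerivAt v1 (v2 x) x := fun x hx =>
    (hyp_hasDerivAt hc1 hx).const_mul _
  have pos : ∀ x : ℝ, |x| < 1 → 0 < 1 - x := fun x hx => by linarith [(abs_lt.1 hx).2]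
  have rp : ∀ (q x : ℝ), |x| < 1 →
      HasDerivAt (fun x : ℝ => (1 - x) ^ q) (-(q * (1 - x) ^ (q - 1))) x := by
    intro q x hx
    refine (((hasDerivAt_id x).const_sub 1).rpow_const (p := q)
      (Or.inl (pos x hx).ne')).congr_deriv ?_
    simp
  have key := ode_unique (c := c) (e := a + b + 1) (q := a * b) hc0
    (y₁ := hyp2F1 a b c) (d₁ := fun z => a * b / c * hyp2F1 (a + 1) (b + 1) (c + 1) z)
    (e₁ := fun z => a * b / c * ((a + 1) * (b + 1) / (c + 1) *
      hyp2F1 (a + 1 + 1) (b + 1 + 1) (c + 1 + 1) z))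
    (y₂ := fun z => (1 - z) ^ p * v0 z)
    (d₂ := fun z => (1 - z) ^ p * v1 z + -(p * (1 - z) ^ (p - 1)) * v0 z)
    (e₂ := fun z => (1 - z) ^ p * v2 z - 2 * p * (1 - z) ^ (p - 1) * v1 z +
      p * (p - 1) * (1 - z) ^ (p - 1 - 1) * v0 z)
    (fun x hx => hyp_hasDerivAt hc0 hx)
    (fun x hx => (hyp_hasDerivAt hc1 hx).const_mul _)
    (fun x hx => ((rp p x hx).mul (dv0 x hx)).congr_deriv (by ring))
    (fun x hx => (((rp p x hx).mul (dv1 x hx)).add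
      (((rp (p - 1) x hx).const_mul p).neg.mul (dv0 x hx))).congr_deriv (by simp; ring))
    (fun x hx => hyp_ode hc0 hx)
    (fun x hx => by
      have o := hyp_ode (a := a') (b := b') hc0 hx
      change x * (1 - x) * v2 x + (c - (a' + b' + 1) * x) * v1 x - a' * b' * v0 x = 0 at o
      have hq := pos x hx
      have s2 : (1 - x) ^ p = (1 - x) * (1 - x) ^ (p - 1) := by
        rw [Real.rpow_sub_one hq.ne' p]; field_simp
      have s3 : (1 - x) ^ (p - 1) = (1 - x) * (1 - x) ^ (p - 1 - 1) := by
        rw [Real.rpow_sub_one hq.ne' (p - 1)]; field_simp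
      rw [s2, s3]
      simp only [a', b', hp] at o ⊢
      linear_combination (1 - x) ^ 2 * (1 - x) ^ (c - a - b - 1 - 1) * o)
    (hyp_zero _ _ _) (by simp [v0, hyp_zero]) (hyp_analytic _ _ hc0)
    (by
      intro x hx
      have hx' : |x| < 1 := by simpa using hx
      refine AnalyticAt.mul ?_ (hyp_analytic _ _ hc0 x hx)
      have hq := pos x hx'
      refine AnalyticAt.congr (f := fun x => Real.exp (Real.log (1 - x) * p)) ?_ ?_
      · have : AnalyticAt ℝ (fun x : ℝ => 1 - x) x := by fun_prop
        exact AnalyticAt.rexp ((this.log hq).mul analyticAt_const)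
      · have : ∀ᶠ t in nhds x, (0:ℝ) < 1 - t :=
          (continuous_const.sub continuous_id).continuousAt.eventually (lt_mem_nhds hq)
        filter_upwards [this] with t ht
        rw [Real.rpow_def_of_pos ht])
  exact key (by simpa using hz)

lemma ps_cont {p : ℕ → ℝ} (hp : Summable p) :
    ContinuousOn (fun x => ∑' k, p k * x ^ k) (Set.Icc 0 1) := by
  refine continuousOn_tsum (u := fun k => |p k|) (fun k => by fun_prop) hp.abs ?_
  intro k x hx
  rw [Real.norm_eq_abs, abs_mul, abs_pow, abs_of_nonneg hx.1]
  exact mul_le_of_le_one_right (abs_nonneg _) (pow_le_one₀ hx.1 hx.2)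

lemma hc_pos {a b c : ℝ} (ha : 0 < a) (hb : 0 < b) (hc0 : 0 < c) (k : ℕ) : 0 < hc a b c k := by
  have := poch_pos ha k
  have := poch_pos hb k
  have := poch_pos hc0 k
  unfold hc; positivity

lemma half_bound {d : ℝ} (hd : 1 < d) : ∃ M : ℝ, 0 ≤ M ∧ ∀ n : ℕ, 0 < n →
    ((n:ℝ) + 1) * hc (1/2) (1/2) d (n + 1) ≤ M * (n:ℝ) ^ (-(d - 1)) := by
  have hd0 : 0 < d := by linarith
  have h1 := Real.GammaSeq_tendsto_Gamma d
  have h2 := Real.GammaSeq_tendsto_Gamma (1/2)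
  have hg : Real.Gamma (1/2) ≠ 0 := (Real.Gamma_pos_of_pos (by norm_num)).ne'
  have h3 := h1.div (h2.pow 2) (pow_ne_zero 2 hg)
  obtain ⟨M, hM⟩ := h3.bddAbove_range
  refine ⟨|M|, abs_nonneg _, fun n hn => ?_⟩
  have hn' : (0:ℝ) < n := by exact_mod_cast hn
  have hMn : Real.GammaSeq d n / Real.GammaSeq (1/2) n ^ 2 ≤ M := hM ⟨n, rfl⟩
  have e : ((n:ℝ) + 1) * hc (1/2) (1/2) d (n + 1) =
      Real.GammaSeq d n / Real.GammaSeq (1/2) n ^ 2 * (n:ℝ) ^ (-(d - 1)) := by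
    have q1 : Real.GammaSeq d n = (n:ℝ) ^ d * n.factorial / poch d (n + 1) := rfl
    have q2 : Real.GammaSeq (1/2) n = (n:ℝ) ^ (1/2:ℝ) * n.factorial / poch (1/2) (n + 1) := rfl
    have p1 := poch_pos hd0 (n + 1)
    have p2 := poch_pos (by norm_num : (0:ℝ) < 1/2) (n + 1)
    have s1 : ((n:ℝ) ^ (1/2:ℝ)) ^ 2 = n := by
      rw [← Real.rpow_natCast, ← Real.rpow_mul hn'.le]; norm_num
    have s2 : (n:ℝ) ^ (-(d - 1)) = n / (n:ℝ) ^ d := by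
      rw [neg_sub, Real.rpow_sub hn', Real.rpow_one]
    have s3 : 0 < (n:ℝ) ^ d := Real.rpow_pos_of_pos hn' _
    rw [q1, q2, s2, div_pow, mul_pow, s1]
    unfold hc
    rw [Nat.factorial_succ]
    push_cast
    field_simp
  rw [e]
  exact mul_le_mul_of_nonneg_right (hMn.trans (le_abs_self _)) (by positivity)

lemma half_summable {d : ℝ} (hd : 1 < d) : Summable (hc (1/2) (1/2) d) := by
  obtain ⟨M, hM0, hM⟩ := half_bound hd
  rw [← summable_nat_add_iff 2]
  have hs : Summable (fun n : ℕ => M * (1 / ((n + 1 : ℕ):ℝ) ^ d)) :=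
    ((summable_nat_add_iff 1).2 (Real.summable_one_div_nat_rpow.2 hd)).mul_left M
  refine Summable.of_nonneg_of_le
    (fun n => (hc_pos (by norm_num) (by norm_num) (by linarith) _).le) (fun n => ?_) hs
  have h := hM (n + 1) (by omega)
  have hn' : (0:ℝ) < ((n + 1 : ℕ):ℝ) := by positivity
  have s2 : ((n + 1 : ℕ):ℝ) ^ (-(d - 1)) = ((n + 1 : ℕ):ℝ) / ((n + 1 : ℕ):ℝ) ^ d := by
      rw [neg_sub, Real.rpow_sub hn', Real.rpow_one]
  rw [s2] at h
  have hp := hc_pos (a := 1/2) (b := 1/2) (c := d) (by norm_num) (by norm_num) (by linarith)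
    (n + 1 + 1)
  have h2 : ((n + 1 : ℕ):ℝ) * hc (1/2) (1/2) d (n + 1 + 1) ≤
      ((n + 1 : ℕ):ℝ) * (M * (1 / ((n + 1 : ℕ):ℝ) ^ d)) := by
    refine le_trans ?_ (h.trans_eq (by ring))
    exact mul_le_mul_of_nonneg_right (by linarith) hp.le
  exact le_of_mul_le_mul_left h2 hn'

lemma half_tendsto {d : ℝ} (hd : 1 < d) :
    Tendsto (fun n : ℕ => (n:ℝ) * hc (1/2) (1/2) d n) atTop (nhds 0) := by
  obtain ⟨M, hM0, hM⟩ := half_bound hd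
  rw [← tendsto_add_atTop_iff_nat 1]
  have ht : Tendsto (fun n : ℕ => M * (n:ℝ) ^ (-(d - 1))) atTop (nhds 0) := by
    have := ((tendsto_rpow_neg_atTop (by linarith : 0 < d - 1)).comp
      tendsto_natCast_atTop_atTop).const_mul M
    simpa using this
  refine squeeze_zero' ?_ ?_ ht
  · filter_upwards with n
    have := hc_pos (a := 1/2) (b := 1/2) (c := d) (by norm_num) (by norm_num) (by linarith) (n + 1)
    positivity
  · filter_upwards [eventually_gt_atTop 0] with n hn
    have := hM n hn
    push_cast; exact this

lemma gauss_rec {d : ℝ} (hd : 1 < d) :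
    (d - 1) * (∑' k, hc (1/2) (1/2) d k) =
      (d - 1/2) ^ 2 / d * ∑' k, hc (1/2) (1/2) (d + 1) k := by
  have hd0 : 0 < d := by linarith
  have H1 := ((half_summable hd).hasSum.mul_left (d - 1)).sub
    ((half_summable (by linarith : 1 < d + 1)).hasSum.mul_left ((d - 1/2) ^ 2 / d))
  have T := H1.tendsto_sum_nat
  have fin : ∀ n : ℕ, ∑ k ∈ Finset.range n, ((d - 1) * hc (1/2) (1/2) d k -
      (d - 1/2) ^ 2 / d * hc (1/2) (1/2) (d + 1) k) = -((n:ℝ) * hc (1/2) (1/2) d n) := by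
    intro n
    induction n with
    | zero => simp
    | succ n ih =>
      rw [Finset.sum_range_succ, ih, hc_succ hd0]
      have e : hc (1/2) (1/2) (d + 1) n = hc (1/2) (1/2) d n * (d / (d + n)) := by
        have p1 := poch_pos hd0 n
        have p2 := poch_pos (by linarith : 0 < d + 1) n
        have := poch_succ d n
        rw [poch_succ'] at this
        unfold hc
        have e2 : poch (d + 1) n = poch d n * (d + n) / d := by field_simp; linarith
        rw [e2]; field_simp
      rw [e]
      push_cast
      have : (0:ℝ) < d + n := by positivity
      field_simp
      ring
  simp only [fin] at T
  have := tendsto_nhds_unique T ((half_tendsto hd).neg)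
  linarith

lemma Gamma_half_bounds {x : ℝ} (hx : 0 < x) :
    Real.Gamma (x + 1/2) ^ 2 ≤ Real.Gamma x * Real.Gamma (x + 1) := by
  have h := Real.Gamma_mul_add_mul_le_rpow_Gamma_mul_rpow_Gamma hx (by linarith : 0 < x + 1)
    (by norm_num : (0:ℝ) < 1/2) (by norm_num : (0:ℝ) < 1/2) (by norm_num)
  have g1 := Real.Gamma_pos_of_pos hx
  have g2 := Real.Gamma_pos_of_pos (by linarith : 0 < x + 1)
  have g3 := Real.Gamma_pos_of_pos (by linarith : 0 < x + 1/2)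
  rw [show 1/2 * x + 1/2 * (x + 1) = x + 1/2 by ring] at h
  have := pow_le_pow_left₀ g3.le h 2
  refine this.trans_eq ?_
  rw [mul_pow, ← Real.rpow_natCast, ← Real.rpow_natCast, ← Real.rpow_mul g1.le,
    ← Real.rpow_mul g2.le]
  norm_num

noncomputable def gaussP (d : ℝ) : ℝ :=
  Real.Gamma d * Real.Gamma (d - 1) / Real.Gamma (d - 1/2) ^ 2

lemma gaussP_bounds {d : ℝ} (hd : 1 < d) : 1 ≤ gaussP d ∧ gaussP d ≤ (d - 1/2) / (d - 1) := by
  have b1 := Gamma_half_bounds (x := d - 1) (by linarith)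
  have b2 := Gamma_half_bounds (x := d - 1/2) (by linarith)
  have g1 := Real.Gamma_pos_of_pos (by linarith : 0 < d - 1)
  have g3 := Real.Gamma_pos_of_pos (by linarith : 0 < d - 1/2)
  have e1 : Real.Gamma d = (d - 1) * Real.Gamma (d - 1) := by
    have := Real.Gamma_add_one (s := d - 1) (by linarith)
    rwa [sub_add_cancel] at this
  have e2 := Real.Gamma_add_one (s := d - 1/2) (by linarith)
  rw [show d - 1 + 1/2 = d - 1/2 by ring, show d - 1 + 1 = d by ring] at b1
  rw [show d - 1/2 + 1/2 = d by ring, e2] at b2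
  have hd1 : 0 < d - 1 := by linarith
  unfold gaussP
  constructor
  · rw [le_div_iff₀ (by positivity)]; linarith
  · rw [div_le_div_iff₀ (by positivity) hd1]
    calc Real.Gamma d * Real.Gamma (d - 1) * (d - 1) = Real.Gamma d ^ 2 := by rw [e1]; ring
      _ ≤ _ := b2
      _ = _ := by ring

lemma gaussP_rec {d : ℝ} (hd : 1 < d) :
    (d - 1) * gaussP d = (d - 1/2) ^ 2 / d * gaussP (d + 1) := by
  have g1 := Real.Gamma_pos_of_pos (by linarith : 0 < d - 1)
  have g3 := Real.Gamma_pos_of_pos (by linarith : 0 < d - 1/2)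
  have e1 : Real.Gamma d = (d - 1) * Real.Gamma (d - 1) := by
    have := Real.Gamma_add_one (s := d - 1) (by linarith)
    rwa [sub_add_cancel] at this
  have e2 := Real.Gamma_add_one (s := d - 1/2) (by linarith)
  have e3 := Real.Gamma_add_one (s := d) (by linarith)
  unfold gaussP
  rw [show d + 1 - 1/2 = d - 1/2 + 1 by ring, e2, e3, show d + 1 - 1 = d by ring]
  have h4 : d - 1/2 ≠ 0 := by linarith
  have h5 : d ≠ 0 := by linarith
  rw [e1]
  clear e2
  generalize d - 1/2 = q at *
  field_simp

lemma gauss_ratio_bound {d : ℝ} (hd : 1 < d) (n : ℕ) :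
    1 ≤ (∑' k, hc (1/2) (1/2) (d + n) k) ∧
    (∑' k, hc (1/2) (1/2) (d + n) k) ≤ 1 + d / (d + n) * ∑' k, hc (1/2) (1/2) d (k + 1) := by
  have hd0 : 0 < d := by linarith
  have hn : (0:ℝ) ≤ n := by positivity
  have hs := half_summable (by linarith : 1 < d + n)
  have hs1 := (summable_nat_add_iff 1).2 hs
  have hs2 := (summable_nat_add_iff 1).2 (half_summable hd)
  rw [hs.tsum_eq_zero_add, hc_zero]
  constructor
  · have : 0 ≤ ∑' k, hc (1/2) (1/2) (d + n) (k + 1) := tsum_nonneg fun k =>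
      (hc_pos (by norm_num) (by norm_num) (by linarith) _).le
    linarith
  · rw [← tsum_mul_left]
    have : ∑' k, hc (1/2) (1/2) (d + n) (k + 1) ≤ ∑' k, d / (d + n) * hc (1/2) (1/2) d (k + 1) := by
      refine hs1.tsum_le_tsum (fun k => ?_) (hs2.mul_left _)
      have p2 := poch_pos (by norm_num : (0:ℝ) < 1/2) (k + 1)
      have p3 := poch_pos (by linarith : 0 < d + 1) k
      have mono : poch (d + 1) k ≤ poch (d + n + 1) k :=
        Finset.prod_le_prod (fun i _ => by positivity) (fun i _ => by linarith)
      unfold hc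
      rw [poch_succ' d, poch_succ' (d + n)]
      have : d / (d + n) * (poch (1/2) (k + 1) * poch (1/2) (k + 1) /
          (((k + 1).factorial : ℝ) * (d * poch (d + 1) k))) =
          poch (1/2) (k + 1) * poch (1/2) (k + 1) /
          (((k + 1).factorial : ℝ) * ((d + n) * poch (d + 1) k)) := by field_simp
      rw [this]
      gcongr
    linarith

lemma gauss {d : ℝ} (hd : 1 < d) : ∑' k, hc (1/2) (1/2) d k = gaussP d := by
  have hP : ∀ n : ℕ, 0 < gaussP (d + n) := fun n =>
    lt_of_lt_of_le one_pos (gaussP_bounds (by have : (0:ℝ) ≤ n := by positivity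
                                              linarith)).1
  have inv : ∀ n : ℕ, (∑' k, hc (1/2) (1/2) (d + n) k) / gaussP (d + n) =
      (∑' k, hc (1/2) (1/2) d k) / gaussP d := by
    intro n
    induction n with
    | zero => simp
    | succ n ih =>
      rw [← ih]
      have hn : (0:ℝ) ≤ n := by positivity
      have hdn : 1 < d + n := by linarith
      have r1 := gauss_rec hdn
      have r2 := gaussP_rec hdn
      have p1 := hP n
      have p2 := hP (n + 1)
      push_cast at p2 ⊢
      rw [← add_assoc] at p2 ⊢
      rw [div_eq_div_iff p2.ne' p1.ne']
      have k1 : (d + n - 1/2) ^ 2 / (d + n) ≠ 0 := by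
        have : 0 < d + n - 1/2 := by linarith
        positivity
      have k2 : (d + n - 1) ≠ 0 := by linarith
      apply mul_left_cancel₀ (mul_ne_zero k1 k2)
      linear_combination (-(d + n - 1) * gaussP (d + n)) * r1 +
        (d + n - 1) * (∑' k, hc (1/2) (1/2) (d + n) k) * r2
  have tn : Tendsto (fun n : ℕ => d + (n:ℝ)) atTop atTop :=
    tendsto_atTop_add_const_left _ _ tendsto_natCast_atTop_atTop
  have t1 : Tendsto (fun n : ℕ => ∑' k, hc (1/2) (1/2) (d + n) k) atTop (nhds 1) := by
    refine tendsto_of_tendsto_of_tendsto_of_le_of_le tendsto_const_nhds ?_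
      (fun n => (gauss_ratio_bound hd n).1) (fun n => (gauss_ratio_bound hd n).2)
    have := ((tn.const_div_atTop d).mul_const (∑' k, hc (1/2) (1/2) d (k + 1))).const_add 1
    simpa using this
  have t2 : Tendsto (fun n : ℕ => gaussP (d + n)) atTop (nhds 1) := by
    have hb : ∀ n : ℕ, 1 < d + n := fun n => by
      have : (0:ℝ) ≤ n := by positivity
      linarith
    refine tendsto_of_tendsto_of_tendsto_of_le_of_le tendsto_const_nhds ?_
      (fun n => (gaussP_bounds (hb n)).1) (fun n => (gaussP_bounds (hb n)).2)
    have t3 : Tendsto (fun n : ℕ => d + (n:ℝ) - 1) atTop atTop :=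
      tendsto_atTop_add_const_right _ (-1) tn
    have := (t3.const_div_atTop (1/2)).const_add 1
    rw [add_zero] at this
    refine this.congr fun n => ?_
    have := hb n
    have : d + n - 1 ≠ 0 := by linarith
    field_simp
    ring
  have t4 := t1.div t2 one_ne_zero
  rw [div_one] at t4
  have t4' : Tendsto (fun _ : ℕ => (∑' k, hc (1/2) (1/2) d k) / gaussP d) atTop (nhds 1) :=
    t4.congr fun n => inv n
  have := tendsto_nhds_unique tendsto_const_nhds t4'
  have p0 := hP 0
  simp only [Nat.cast_zero, add_zero] at p0
  rwa [div_eq_one_iff_eq p0.ne'] at this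

/-- coefficients of the confluent series -/
noncomputable def mc (c : ℝ) (k : ℕ) : ℝ := poch (c + 1/2) k / (poch c k * (Nat.factorial k : ℝ))

noncomputable def Mf (c x : ℝ) : ℝ := ∑' k, mc c k * x ^ k

lemma mc_pos {c : ℝ} (hc0 : 0 < c) (k : ℕ) : 0 < mc c k := by
  have := poch_pos hc0 k
  have := poch_pos (by linarith : 0 < c + 1/2) k
  unfold mc; positivity

lemma mc_succ {c : ℝ} (hc0 : 0 < c) (k : ℕ) :
    ((k:ℝ) + 1) * mc c (k + 1) = (c + 1/2) / c * mc (c + 1) k := by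
  have := poch_pos (by linarith : (0:ℝ) < c + 1) k
  unfold mc
  rw [poch_succ', poch_succ', Nat.factorial_succ, show c + 1/2 + 1 = c + 1 + 1/2 by ring]
  push_cast
  field_simp

lemma mc_le {c : ℝ} (hc0 : 0 < c) (k : ℕ) :
    mc c k ≤ (1 + k / c) * (1 / (Nat.factorial k : ℝ)) := by
  have p1 := poch_pos hc0 k
  have h1 : poch (c + 1/2) k ≤ poch (c + 1) k :=
    Finset.prod_le_prod (fun i _ => by positivity) (fun i _ => by linarith)
  have h2 : poch (c + 1) k = poch c k * ((c + k) / c) := by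
    have := poch_succ c k
    rw [poch_succ'] at this
    field_simp; linarith
  unfold mc
  rw [h2] at h1
  calc poch (c + 1/2) k / (poch c k * (Nat.factorial k : ℝ))
      ≤ (poch c k * ((c + k) / c)) / (poch c k * (Nat.factorial k : ℝ)) := by gcongr
    _ = _ := by field_simp

lemma exp_hasSum (x : ℝ) : HasSum (fun k : ℕ => 1 / (Nat.factorial k : ℝ) * x ^ k) (Real.exp x) := by
  have := NormedSpace.expSeries_div_hasSum_exp x
  rw [← Real.exp_eq_exp_ℝ] at this
  exact this.congr_fun fun k => by ring

lemma exp_hasSum' (c x : ℝ) : HasSum (fun k : ℕ => (1 + k / c) * (1 / (Nat.factorial k : ℝ)) * x ^ k)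
    ((1 + x / c) * Real.exp x) := by
  have h1 := exp_hasSum x
  have h2 : HasSum (fun k : ℕ => (k:ℝ) * (1 / (Nat.factorial k : ℝ)) * x ^ k) (x * Real.exp x) := by
    refine hasSum_shift ?_ (by simp)
    refine (h1.mul_left x).congr_fun fun k => ?_
    rw [Nat.factorial_succ]; push_cast; field_simp; ring
  have := (h1.add (h2.mul_left (1 / c))).congr_fun
    (g := fun k : ℕ => (1 + k / c) * (1 / (Nat.factorial k : ℝ)) * x ^ k) (fun k => by ring)
  convert this using 1
  ring

lemma mc_summable {c : ℝ} (hc0 : 0 < c) (x : ℝ) : Summable (fun k => mc c k * x ^ k) := by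
  refine Summable.of_norm_bounded (exp_hasSum' c |x|).summable fun k => ?_
  rw [Real.norm_eq_abs, abs_mul, abs_pow, abs_of_pos (mc_pos hc0 k)]
  exact mul_le_mul_of_nonneg_right (mc_le hc0 k) (by positivity)

lemma Mf_nonneg {c x : ℝ} (hc0 : 0 < c) (hx : 0 ≤ x) : 0 ≤ Mf c x :=
  tsum_nonneg fun k => mul_nonneg (mc_pos hc0 k).le (by positivity)

lemma Mf_le {c x : ℝ} (hc0 : 0 < c) (hx : 0 ≤ x) : Mf c x ≤ (1 + x / c) * Real.exp x := by
  rw [← (exp_hasSum' c x).tsum_eq]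
  exact (mc_summable hc0 x).tsum_le_tsum
    (fun k => mul_le_mul_of_nonneg_right (mc_le hc0 k) (by positivity)) (exp_hasSum' c x).summable

lemma Mf_hasDerivAt {c : ℝ} (hc0 : 0 < c) (x : ℝ) :
    HasDerivAt (Mf c) ((c + 1/2) / c * Mf (c + 1) x) x := by
  have := ps_hasDerivAt (p := mc c) (R := |x| + 1) (fun y _ => mc_summable hc0 y)
    (z := x) (by linarith)
  refine HasDerivAt.congr_deriv (f := Mf c) this ?_
  rw [Mf, ← tsum_mul_left]
  refine tsum_congr fun k => ?_
  rw [mc_succ hc0]; ring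

lemma Mf_cont {c : ℝ} (hc0 : 0 < c) : Continuous (Mf c) :=
  continuous_iff_continuousAt.2 fun x => (Mf_hasDerivAt hc0 x).continuousAt

/-- the majorant -/
lemma EM_le {c α β b q : ℝ} (hc0 : 0 < c) (hα : 0 ≤ α) (hb : 0 < b) :
    ‖b ^ q * (Real.exp (-β * b ^ 2) * Mf c (α * b ^ 2))‖ ≤
      b ^ q * Real.exp (-(β - α) * b ^ 2) + α / c * (b ^ (q + 2) * Real.exp (-(β - α) * b ^ 2)) := by
  have h0 : 0 ≤ α * b ^ 2 := by positivity
  have h1 := Mf_nonneg hc0 h0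
  have h2 := Mf_le hc0 h0
  have hbq : 0 < b ^ q := Real.rpow_pos_of_pos hb _
  rw [Real.norm_eq_abs, abs_of_nonneg (by positivity)]
  have e : b ^ (q + 2) = b ^ q * b ^ 2 := by
    rw [Real.rpow_add hb]; norm_num
  have e2 : Real.exp (-(β - α) * b ^ 2) = Real.exp (-β * b ^ 2) * Real.exp (α * b ^ 2) := by
    rw [← Real.exp_add]; congr 1; ring
  rw [e, e2]
  calc b ^ q * (Real.exp (-β * b ^ 2) * Mf c (α * b ^ 2)) ≤
      b ^ q * (Real.exp (-β * b ^ 2) * ((1 + α * b ^ 2 / c) * Real.exp (α * b ^ 2))) := by gcongr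
    _ = _ := by ring

lemma EM_integrable {c α β q : ℝ} (hc0 : 0 < c) (hα : 0 ≤ α) (hαβ : α < β) (hq : -1 < q) :
    IntegrableOn (fun b : ℝ => b ^ q * (Real.exp (-β * b ^ 2) * Mf c (α * b ^ 2))) (Set.Ioi 0) := by
  have hβ : 0 < β - α := by linarith
  have g1 := integrableOn_rpow_mul_exp_neg_mul_sq hβ hq
  have g2 := (integrableOn_rpow_mul_exp_neg_mul_sq hβ (by linarith : -1 < q + 2)).const_mul (α / c)
  refine Integrable.mono' (g1.add g2) ?_ ?_
  · refine ContinuousOn.aestronglyMeasurable ?_ measurableSet_Ioi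
    refine ContinuousOn.mul ?_ ?_
    · exact continuousOn_id.rpow_const fun x hx => Or.inl (ne_of_gt hx)
    · have := Mf_cont hc0
      fun_prop
  · filter_upwards [ae_restrict_mem measurableSet_Ioi] with b hb
    exact EM_le hc0 hα hb

lemma EM_tendsto {c α β : ℝ} (q : ℝ) (hc0 : 0 < c) (hα : 0 ≤ α) (hαβ : α < β) :
    Tendsto (fun b : ℝ => b ^ q * (Real.exp (-β * b ^ 2) * Mf c (α * b ^ 2))) atTop (nhds 0) := by
  have hβ : 0 < β - α := by linarith
  have ht : ∀ p : ℝ, Tendsto (fun b : ℝ => b ^ p * Real.exp (-(β - α) * b ^ 2)) atTop (nhds 0) := by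
    intro p
    refine (rpow_mul_exp_neg_mul_sq_isLittleO_exp_neg hβ p).trans_tendsto ?_
    refine Real.tendsto_exp_atBot.comp ?_
    exact tendsto_id.const_mul_atTop_of_neg (by norm_num)
  have := (ht q).add ((ht (q + 2)).const_mul (α / c))
  rw [mul_zero, add_zero] at this
  refine squeeze_zero_norm' ?_ this
  filter_upwards [eventually_gt_atTop 0] with b hb
  exact EM_le hc0 hα hb

lemma EM_integral {c α β a : ℝ} (hc0 : 0 < c) (hα : 0 ≤ α) (hαβ : α < β) (ha : 0 < a) :
    ∫ b in Set.Ioi (0:ℝ), b ^ (2 * a - 1) * (Real.exp (-β * b ^ 2) * Mf c (α * b ^ 2)) =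
      1 / 2 * β ^ (-a) * Real.Gamma a * hyp2F1 (c + 1/2) a c (α / β) := by
  have hβ : 0 < β := by linarith
  have I : ∀ k : ℕ, ∫ b in Set.Ioi (0:ℝ), mc c k * α ^ k *
      (b ^ (2 * a - 1 + 2 * k) * Real.exp (-β * b ^ 2)) =
      1 / 2 * β ^ (-a) * Real.Gamma a * (hc (c + 1/2) a c k * (α / β) ^ k) := by
    intro k
    have hk : (0:ℝ) ≤ k := by positivity
    have h := integral_rpow_mul_exp_neg_mul_rpow (p := 2) (q := 2 * a - 1 + 2 * k) (b := β)
      (by norm_num) (by linarith) hβ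
    simp only [Real.rpow_two] at h
    rw [integral_const_mul, h, show (2 * a - 1 + 2 * k + 1) / 2 = k + a by ring,
      show -(2 * a - 1 + 2 * k + 1) / 2 = -a - k by ring, Gamma_nat_add_eq ha,
      Real.rpow_sub hβ, Real.rpow_natCast]
    have := poch_pos hc0 k
    unfold mc hc
    rw [div_pow]
    field_simp
  have Int : ∀ k : ℕ, IntegrableOn (fun b : ℝ => mc c k * α ^ k *
      (b ^ (2 * a - 1 + 2 * k) * Real.exp (-β * b ^ 2))) (Set.Ioi 0) := by
    intro k
    have hk : (0:ℝ) ≤ k := by positivity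
    exact (integrableOn_rpow_mul_exp_neg_mul_sq hβ (by linarith)).const_mul _
  have hz : |α / β| < 1 := by
    rw [abs_of_nonneg (by positivity), div_lt_one hβ]; exact hαβ
  have S := ((hc_summable (a := c + 1/2) (b := a) hc0 hz).mul_left
    (1 / 2 * β ^ (-a) * Real.Gamma a))
  have N : ∀ k : ℕ, ∫ b in Set.Ioi (0:ℝ), ‖mc c k * α ^ k *
      (b ^ (2 * a - 1 + 2 * k) * Real.exp (-β * b ^ 2))‖ =
      ∫ b in Set.Ioi (0:ℝ), mc c k * α ^ k *
      (b ^ (2 * a - 1 + 2 * k) * Real.exp (-β * b ^ 2)) := by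
    intro k
    refine setIntegral_congr_fun measurableSet_Ioi fun b hb => ?_
    have hb' : 0 < b := hb
    have := mc_pos hc0 k
    have := Real.rpow_pos_of_pos hb' (2 * a - 1 + 2 * k)
    rw [Real.norm_eq_abs, abs_of_nonneg (by positivity)]
  have key := hasSum_integral_of_summable_integral_norm Int (by simp only [N, I]; exact S)
  simp only [I] at key
  rw [hyp_eq, ← tsum_mul_left, key.tsum_eq]
  refine setIntegral_congr_fun measurableSet_Ioi fun b hb => ?_
  have hb' : 0 < b := hb
  simp only [Mf]
  rw [← tsum_mul_left, ← tsum_mul_left]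
  refine tsum_congr fun k => ?_
  rw [Real.rpow_add hb', mul_pow, ← pow_mul]
  have : b ^ (2 * (k:ℝ)) = b ^ (2 * k) := by
    rw [← Real.rpow_natCast]; push_cast; rfl
  rw [this]; ring

/-- contiguity -/
lemma contig {a c z : ℝ} (hc0 : 0 < c) (hz : |z| < 1) :
    hyp2F1 a a c z - 2 * (z * (a / c * hyp2F1 (a + 1) a (c + 1) z)) +
      z * (z * (a / c * ((a + 1) / (c + 1) * hyp2F1 (a + 1 + 1) a (c + 1 + 1) z))) =
      hyp2F1 a (a - 2) c z := by
  have hc1 : 0 < c + 1 := by linarith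
  have hc2 : 0 < c + 1 + 1 := by linarith
  have S0 := (hc_summable (a := a) (b := a) hc0 hz).hasSum
  have S1 := ((hc_summable (a := a + 1) (b := a) hc1 hz).hasSum.mul_left (a / c)).mul_left z
  have S2 := ((((hc_summable (a := a + 1 + 1) (b := a) hc2 hz).hasSum.mul_left
    ((a + 1) / (c + 1))).mul_left (a / c)).mul_left z).mul_left z
  have T1 : HasSum (fun k : ℕ => (k:ℝ) * poch a k * poch a (k - 1) /
      ((Nat.factorial k : ℝ) * poch c k) * z ^ k)
      (z * (a / c * hyp2F1 (a + 1) a (c + 1) z)) := by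
    refine hasSum_shift (S1.congr_fun fun k => ?_) (by simp)
    have := poch_pos hc1 k
    unfold hc
    rw [poch_succ' a, poch_succ' c, Nat.factorial_succ, Nat.add_sub_cancel]
    push_cast
    field_simp
    ring
  have T2 : HasSum (fun k : ℕ => (k:ℝ) * ((k:ℝ) - 1) * poch a k * poch a (k - 2) /
      ((Nat.factorial k : ℝ) * poch c k) * z ^ k)
      (z * (z * (a / c * ((a + 1) / (c + 1) * hyp2F1 (a + 1 + 1) a (c + 1 + 1) z)))) := by
    refine hasSum_shift (hasSum_shift (S2.congr_fun fun k => ?_) (by simp)) (by simp)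
    have := poch_pos hc2 k
    unfold hc
    rw [poch_succ' a, poch_succ' (a + 1), poch_succ' c, poch_succ' (c + 1), Nat.factorial_succ,
      Nat.factorial_succ, show k + 1 + 1 - 2 = k by omega]
    push_cast
    field_simp
    ring
  have tot := (S0.sub (T1.mul_left 2)).add T2
  refine tot.unique ((hc_summable (a := a) (b := a - 2) hc0 hz).hasSum.congr_fun fun k => ?_)
  have p : poch a k - 2 * k * poch a (k - 1) + k * (k - 1) * poch a (k - 2) = poch (a - 2) k := by
    match k with
    | 0 => simp [poch_zero]
    | 1 => simp [poch_succ, poch_zero]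
    | m + 2 =>
      rw [poch_succ' (a - 2), poch_succ' (a - 2 + 1), show a - 2 + 1 + 1 = a by ring,
        show m + 2 - 1 = m + 1 by omega, show m + 2 - 2 = m by omega, poch_succ, poch_succ]
      push_cast; ring
  unfold hc
  rw [← p]
  ring

noncomputable def EE (c α β b : ℝ) : ℝ := Real.exp (-β * b ^ 2) * Mf c (α * b ^ 2)

lemma EE_hasDerivAt {c α β : ℝ} (hc0 : 0 < c) (b : ℝ) :
    HasDerivAt (EE c α β)
      (2 * b * (-β * EE c α β b + α * ((c + 1/2) / c) * EE (c + 1) α β b)) b := by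
  have h1 : HasDerivAt (fun b : ℝ => -β * b ^ 2) (-β * (2 * b)) b := by
    simpa using (hasDerivAt_pow 2 b).const_mul (-β)
  have h2 : HasDerivAt (fun b : ℝ => α * b ^ 2) (α * (2 * b)) b := by
    simpa using (hasDerivAt_pow 2 b).const_mul α
  have := h1.exp.mul ((Mf_hasDerivAt hc0 (α * b ^ 2)).comp b h2)
  refine HasDerivAt.congr_deriv (f := EE c α β) this ?_
  simp only [EE, Function.comp]
  ring

noncomputable def SS1 (c α β b : ℝ) : ℝ :=
  -β * EE c α β b + α * ((c + 1/2) / c) * EE (c + 1) α β b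
noncomputable def SS2 (c α β b : ℝ) : ℝ :=
  -β * SS1 c α β b + α * ((c + 1/2) / c) * SS1 (c + 1) α β b
noncomputable def SS3 (c α β b : ℝ) : ℝ :=
  -β * SS2 c α β b + α * ((c + 1/2) / c) * SS2 (c + 1) α β b

lemma SS1_hasDerivAt {c α β : ℝ} (hc0 : 0 < c) (b : ℝ) :
    HasDerivAt (SS1 c α β) (2 * b * SS2 c α β b) b := by
  have := ((EE_hasDerivAt (α := α) (β := β) hc0 b).const_mul (-β)).add
    ((EE_hasDerivAt (α := α) (β := β) (by linarith : 0 < c + 1) b).const_mul (α * ((c + 1/2) / c)))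
  refine HasDerivAt.congr_deriv (f := SS1 c α β) this ?_
  simp only [SS2, SS1]; ring

lemma SS2_hasDerivAt {c α β : ℝ} (hc0 : 0 < c) (b : ℝ) :
    HasDerivAt (SS2 c α β) (2 * b * SS3 c α β b) b := by
  have := ((SS1_hasDerivAt (α := α) (β := β) hc0 b).const_mul (-β)).add
    ((SS1_hasDerivAt (α := α) (β := β) (by linarith : 0 < c + 1) b).const_mul (α * ((c + 1/2) / c)))
  refine HasDerivAt.congr_deriv (f := SS2 c α β) this ?_
  simp only [SS3]; ring

lemma EE_deriv3 {c α β : ℝ} (hc0 : 0 < c) (b : ℝ) :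
    deriv^[3] (EE c α β) b = 12 * b * SS2 c α β b + 8 * b ^ 3 * SS3 c α β b := by
  have d1 : deriv (EE c α β) = fun b => 2 * b * SS1 c α β b :=
    funext fun b => (EE_hasDerivAt hc0 b).deriv
  have d2 : deriv (fun b => 2 * b * SS1 c α β b) =
      fun b => 2 * SS1 c α β b + 4 * b ^ 2 * SS2 c α β b := by
    funext b
    have := ((hasDerivAt_id b).const_mul 2).mul (SS1_hasDerivAt (α := α) (β := β) hc0 b)
    refine (HasDerivAt.congr_deriv (f := fun b => 2 * b * SS1 c α β b) this ?_).deriv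
    simp; ring
  have d3 : HasDerivAt (fun b => 2 * SS1 c α β b + 4 * b ^ 2 * SS2 c α β b)
      (12 * b * SS2 c α β b + 8 * b ^ 3 * SS3 c α β b) b := by
    have := ((SS1_hasDerivAt (α := α) (β := β) hc0 b).const_mul 2).add
      (((hasDerivAt_pow 2 b).const_mul 4).mul (SS2_hasDerivAt (α := α) (β := β) hc0 b))
    refine HasDerivAt.congr_deriv (f := fun b => 2 * SS1 c α β b + 4 * b ^ 2 * SS2 c α β b) this ?_
    simp; ring
  show deriv (deriv (deriv (EE c α β))) b = _
  rw [d1, d2, d3.deriv]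

lemma EE_int {c α β q : ℝ} (hc0 : 0 < c) (hα : 0 ≤ α) (hαβ : α < β) (hq : -1 < q) :
    IntegrableOn (fun b : ℝ => b ^ q * EE c α β b) (Set.Ioi 0) := EM_integrable hc0 hα hαβ hq

lemma lin_int {f g : ℝ → ℝ} {q : ℝ} (x y : ℝ) (hf : IntegrableOn (fun b : ℝ => b ^ q * f b) (Set.Ioi 0))
    (hg : IntegrableOn (fun b : ℝ => b ^ q * g b) (Set.Ioi 0)) :
    IntegrableOn (fun b : ℝ => b ^ q * (x * f b + y * g b)) (Set.Ioi 0) := by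
  refine ((hf.const_mul x).add (hg.const_mul y)).congr (ae_of_all _ fun b => ?_)
  simp only [Pi.add_apply]; ring

lemma lin_integral {f g : ℝ → ℝ} {q : ℝ} (x y : ℝ) (hf : IntegrableOn (fun b : ℝ => b ^ q * f b) (Set.Ioi 0))
    (hg : IntegrableOn (fun b : ℝ => b ^ q * g b) (Set.Ioi 0)) :
    ∫ b in Set.Ioi (0:ℝ), b ^ q * (x * f b + y * g b) =
    x * (∫ b in Set.Ioi (0:ℝ), b ^ q * f b) + y * ∫ b in Set.Ioi (0:ℝ), b ^ q * g b := by
  rw [← integral_const_mul, ← integral_const_mul, ← integral_add (hf.const_mul x) (hg.const_mul y)]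
  refine integral_congr_ae (ae_of_all _ fun b => ?_)
  simp only; ring

lemma lin_tend {f g : ℝ → ℝ} {q : ℝ} (x y : ℝ) (hf : Tendsto (fun b : ℝ => b ^ q * f b) atTop (nhds 0))
    (hg : Tendsto (fun b : ℝ => b ^ q * g b) atTop (nhds 0)) :
    Tendsto (fun b : ℝ => b ^ q * (x * f b + y * g b)) atTop (nhds 0) := by
  have := (hf.const_mul x).add (hg.const_mul y)
  rw [mul_zero, mul_zero, add_zero] at this
  refine this.congr fun b => ?_
  ring

lemma SS1_int {c α β q : ℝ} (hc0 : 0 < c) (hα : 0 ≤ α) (hαβ : α < β) (hq : -1 < q) :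
    IntegrableOn (fun b : ℝ => b ^ q * SS1 c α β b) (Set.Ioi 0) :=
  lin_int _ _ (EE_int hc0 hα hαβ hq) (EE_int (by linarith) hα hαβ hq)
lemma SS2_int {c α β q : ℝ} (hc0 : 0 < c) (hα : 0 ≤ α) (hαβ : α < β) (hq : -1 < q) :
    IntegrableOn (fun b : ℝ => b ^ q * SS2 c α β b) (Set.Ioi 0) :=
  lin_int _ _ (SS1_int hc0 hα hαβ hq) (SS1_int (by linarith) hα hαβ hq)
lemma SS3_int {c α β q : ℝ} (hc0 : 0 < c) (hα : 0 ≤ α) (hαβ : α < β) (hq : -1 < q) :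
    IntegrableOn (fun b : ℝ => b ^ q * SS3 c α β b) (Set.Ioi 0) :=
  lin_int _ _ (SS2_int hc0 hα hαβ hq) (SS2_int (by linarith) hα hαβ hq)

lemma SS1_tend {c α β q : ℝ} (hc0 : 0 < c) (hα : 0 ≤ α) (hαβ : α < β) :
    Tendsto (fun b : ℝ => b ^ q * SS1 c α β b) atTop (nhds 0) :=
  lin_tend _ _ (EM_tendsto q hc0 hα hαβ) (EM_tendsto q (by linarith) hα hαβ)
lemma SS2_tend {c α β q : ℝ} (hc0 : 0 < c) (hα : 0 ≤ α) (hαβ : α < β) :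
    Tendsto (fun b : ℝ => b ^ q * SS2 c α β b) atTop (nhds 0) :=
  lin_tend _ _ (SS1_tend hc0 hα hαβ) (SS1_tend (by linarith) hα hαβ)

lemma SS2_integral {c α β a : ℝ} (hc0 : 0 < c) (hα : 0 ≤ α) (hαβ : α < β) (ha : a = c + 1/2) :
    ∫ b in Set.Ioi (0:ℝ), b ^ (2 * a - 1) * SS2 c α β b =
      1 / 2 * β ^ (2 - a) * Real.Gamma a * hyp2F1 a (a - 2) c (α / β) := by
  have hβ : 0 < β := by linarith
  have ha0 : 0 < a := by linarith
  have hq : -1 < 2 * a - 1 := by linarith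
  have hc1 : 0 < c + 1 := by linarith
  have hc2 : 0 < c + 1 + 1 := by linarith
  have e0 := EM_integral hc0 hα hαβ ha0
  have e1 := EM_integral hc1 hα hαβ ha0
  have e2 := EM_integral hc2 hα hαβ ha0
  have i0 := EE_int hc0 hα hαβ hq
  have i1 := EE_int hc1 hα hαβ hq
  have i2 := EE_int hc2 hα hαβ hq
  have hz : |α / β| < 1 := by
    rw [abs_of_nonneg (by positivity), div_lt_one hβ]; exact hαβ
  have ct := contig (a := a) hc0 hz
  have := lin_integral (-β) (α * ((c + 1/2) / c)) (SS1_int hc0 hα hαβ hq) (SS1_int hc1 hα hαβ hq)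
  have l0 := lin_integral (-β) (α * ((c + 1/2) / c)) i0 i1
  have l1 := lin_integral (-β) (α * ((c + 1 + 1/2) / (c + 1))) i1 i2
  simp only [EE] at l0 l1
  rw [e0, e1] at l0
  rw [e1, e2] at l1
  simp only [SS2]
  rw [this]
  simp only [SS1, EE]
  rw [l0, l1]
  rw [show c + 1/2 = a from ha.symm, show c + 1 + 1/2 = a + 1 by rw [ha]; ring,
    show c + 1 + 1 + 1/2 = a + 1 + 1 by rw [ha]; ring, ← ct]
  have hb : β ^ (2 - a) = β ^ 2 * β ^ (-a) := by
    rw [sub_eq_add_neg, Real.rpow_add hβ]; norm_num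
  rw [hb]
  field_simp
  ring

lemma EE_bint {δ c α β a : ℝ} (hc0 : 0 < c) (hα : 0 ≤ α) (hαβ : α < β) (hδ : δ = 2 * c)
    (ha : a = c + 1/2) :
    ∫ b in Set.Ioi (0:ℝ), b ^ (δ - 1) * deriv^[3] (EE c α β) b =
      -(4 * (δ - 2)) * (1 / 2 * β ^ (2 - a) * Real.Gamma a * hyp2F1 a (a - 2) c (α / β)) := by
  rw [← SS2_integral hc0 hα hαβ ha, show 2 * a - 1 = δ by rw [ha, hδ]; ring]
  have J2 : IntegrableOn (fun b : ℝ => b ^ δ * SS2 c α β b) (Set.Ioi 0) :=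
    SS2_int hc0 hα hαβ (by linarith)
  have J3 : IntegrableOn (fun b : ℝ => b ^ (δ + 2) * SS3 c α β b) (Set.Ioi 0) :=
    SS3_int hc0 hα hαβ (by linarith)
  have key := integral_Ioi_of_hasDerivAt_of_tendsto (a := (0:ℝ)) (m := 0)
    (f := fun b => 4 * (b ^ (δ + 1) * SS2 c α β b))
    (f' := fun b => 4 * (δ + 1) * (b ^ δ * SS2 c α β b) + 8 * (b ^ (δ + 2) * SS3 c α β b))
    (by
      have : ContinuousAt (SS2 c α β) 0 := (SS2_hasDerivAt hc0 0).continuousAt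
      have h2 : ContinuousAt (fun b : ℝ => b ^ (δ + 1)) 0 :=
        Real.continuousAt_rpow_const _ _ (Or.inr (by linarith))
      exact (continuousAt_const.mul (h2.mul this)).continuousWithinAt)
    (by
      intro b hb
      have hb' : (0:ℝ) < b := hb
      have h1 := Real.hasDerivAt_rpow_const (x := b) (p := δ + 1) (Or.inl hb'.ne')
      refine ((h1.mul (SS2_hasDerivAt (α := α) (β := β) hc0 b)).const_mul 4).congr_deriv ?_
      rw [show δ + 1 - 1 = δ by ring, show δ + 2 = δ + 1 + 1 by ring, Real.rpow_add hb' (δ + 1),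
        Real.rpow_one]
      ring)
    ((J2.const_mul _).add (J3.const_mul _))
    (by
      have := (SS2_tend (q := δ + 1) hc0 hα hαβ).const_mul 4
      simpa using this)
  rw [Real.zero_rpow (by linarith), integral_add (J2.const_mul _) (J3.const_mul _),
    integral_const_mul, integral_const_mul] at key
  have e : ∫ b in Set.Ioi (0:ℝ), b ^ (δ - 1) * deriv^[3] (EE c α β) b =
      ∫ b in Set.Ioi (0:ℝ), (12 * (b ^ δ * SS2 c α β b) + 8 * (b ^ (δ + 2) * SS3 c α β b)) := by
    refine setIntegral_congr_fun measurableSet_Ioi fun b hb => ?_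
    have hb' : (0:ℝ) < b := hb
    rw [EE_deriv3 hc0, show δ + 2 = δ - 1 + 3 by ring, Real.rpow_add hb',
      show b ^ δ = b ^ (δ - 1) * b by rw [← Real.rpow_add_one hb'.ne']; ring_nf]
    norm_num
    ring
  rw [e, integral_add (J2.const_mul _) (J3.const_mul _), integral_const_mul, integral_const_mul]
  linarith

/-- the kernel obtained from the `b`-integral -/
noncomputable def HH (δ s r : ℝ) : ℝ :=
  -(Kcoef δ / 4) * (r * (1 - r)) ^ (-(3/2) : ℝ) * (s * (1 - s)) ^ ((1:ℝ)/2) *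
    hyp2F1 (-(1/2)) (3/2) (δ / 2) (s * (1 - r) / (r * (1 - s)))

lemma pow_identity {c s r : ℝ} (hs : 0 < s) (hsr : s < r) (hr : r < 1) :
    ((2 : ℝ) ^ (c - 1) * (r * (1 - r)) ^ c)⁻¹ * ((2 * (r - s)) ^ ((1:ℝ)/2) * (s / r) ^ ((1:ℝ)/2)) *
      (((1 - s) / (2 * (r - s) * (1 - r))) ^ (3/2 - c) * ((r - s) / (r * (1 - s))) ^ (1 - c)) =
    (r * (1 - r)) ^ (-(3/2) : ℝ) * (s * (1 - s)) ^ ((1:ℝ)/2) := by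
  have h1 : 0 < r - s := by linarith
  have h2 : 0 < 1 - r := by linarith
  have h3 : 0 < 1 - s := by linarith
  have h4 : 0 < r := by linarith
  rw [Real.rpow_def_of_pos (by positivity), Real.rpow_def_of_pos (by positivity),
    Real.rpow_def_of_pos (by positivity), Real.rpow_def_of_pos (by positivity),
    Real.rpow_def_of_pos (by positivity), Real.rpow_def_of_pos (by positivity),
    Real.rpow_def_of_pos (by positivity), Real.rpow_def_of_pos (by positivity)]
  rw [Real.log_mul h4.ne' h2.ne', Real.log_mul (by norm_num) h1.ne', Real.log_div hs.ne' h4.ne',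
    Real.log_div h3.ne' (by positivity), Real.log_mul (by positivity) h2.ne',
    Real.log_mul (by norm_num) h1.ne', Real.log_div h1.ne' (by positivity),
    Real.log_mul h4.ne' h3.ne', Real.log_mul hs.ne' h3.ne']
  simp only [← Real.exp_add, ← Real.exp_neg]
  congr 1
  ring

lemma Ccoef_eq {δ : ℝ} (hδ : 0 < δ) (k : ℕ) :
    Ccoef δ k = Real.Gamma ((δ + 1) / 2) / Real.Gamma (δ / 2) ^ 2 * mc (δ / 2) k := by
  have h1 : 0 < δ / 2 := by positivity
  have := poch_pos h1 k
  have := Real.Gamma_pos_of_pos h1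
  unfold Ccoef mc
  rw [Gamma_nat_add_eq (by positivity), Gamma_nat_add_eq h1, show δ / 2 + 1/2 = (δ + 1) / 2 by ring]
  field_simp

lemma Sigma_eq {δ s r : ℝ} (hδ : 0 < δ) (hs : 0 < s) (hsr : s < r) (hr : r < 1) :
    SigmaRS δ r s = fun b => ((2 : ℝ) ^ (δ / 2 - 1) * (r * (1 - r)) ^ (δ / 2))⁻¹ *
      (Real.Gamma ((δ + 1) / 2) / Real.Gamma (δ / 2) ^ 2 *
      ((2 * (r - s)) ^ ((1:ℝ)/2) * (s / r) ^ ((1:ℝ)/2))) *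
      EE (δ / 2) (s / (2 * r * (r - s))) ((1 - s) / (2 * (r - s) * (1 - r))) b := by
  have h1 : 0 < r - s := by linarith
  have h2 : 0 < 1 - r := by linarith
  have h3 : 0 < 1 - s := by linarith
  have h4 : 0 < r := by linarith
  funext b
  have e1 : ∀ k : ℕ, Ccoef δ k * fcoef s r k * b ^ (2 * k) =
      (Real.Gamma ((δ + 1) / 2) / Real.Gamma (δ / 2) ^ 2 *
      ((2 * (r - s)) ^ ((1:ℝ)/2) * (s / r) ^ ((1:ℝ)/2))) *
      (mc (δ / 2) k * (s / (2 * r * (r - s)) * b ^ 2) ^ k) := by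
    intro k
    rw [Ccoef_eq hδ, fcoef, if_pos hsr, Real.rpow_sub (by positivity), Real.rpow_add (by positivity),
      Real.rpow_natCast, Real.rpow_natCast, pow_mul,
      show s / (2 * r * (r - s)) * b ^ 2 = (s / r) * b ^ 2 / (2 * (r - s)) by field_simp,
      div_pow ((s / r) * b ^ 2), mul_pow (s / r)]
    ring
  rw [SigmaRS, tsum_congr e1, tsum_mul_left, EE, Mf, Dcoef, if_pos hsr]
  have e2 : -((1 - s) / ((r - s) * (1 - r))) * b ^ 2 / 2 =
      -((1 - s) / (2 * (r - s) * (1 - r))) * b ^ 2 := by field_simp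
  rw [e2]
  ring

lemma J_eq {δ s r : ℝ} (hδ : 0 < δ) (hs : 0 < s) (hsr : s < r) (hr : r < 1) :
    ∫ b in Set.Ioi (0:ℝ), b ^ (δ - 1) * deriv^[3] (SigmaRS δ r s) b =
      4 * (δ - 2) * HH δ s r := by
  have h1 : 0 < r - s := by linarith
  have h2 : 0 < 1 - r := by linarith
  have h3 : 0 < 1 - s := by linarith
  have h4 : 0 < r := by linarith
  have h5 : 0 < δ / 2 := by positivity
  have dm : ∀ (B : ℝ) (f : ℝ → ℝ), deriv (fun b => B * f b) = fun b => B * deriv f b := by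
    intro B f; funext b; exact deriv_const_mul_field _
  have d3 : ∀ (B : ℝ) (f : ℝ → ℝ) (b : ℝ), deriv^[3] (fun b => B * f b) b = B * deriv^[3] f b := by
    intro B f b
    show deriv (deriv (deriv (fun b => B * f b))) b = B * deriv (deriv (deriv f)) b
    rw [dm, dm, dm]
  have hα : 0 ≤ s / (2 * r * (r - s)) := by positivity
  have hβ : 0 < (1 - s) / (2 * (r - s) * (1 - r)) := by positivity
  have hdiff : (1 - s) / (2 * (r - s) * (1 - r)) - s / (2 * r * (r - s)) = 1 / (2 * r * (1 - r)) := by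
    field_simp; ring
  have hαβ : s / (2 * r * (r - s)) < (1 - s) / (2 * (r - s) * (1 - r)) := by
    have : 0 < 1 / (2 * r * (1 - r)) := by positivity
    linarith
  have hz : s / (2 * r * (r - s)) / ((1 - s) / (2 * (r - s) * (1 - r))) =
      s * (1 - r) / (r * (1 - s)) := by field_simp
  have hz1 : 1 - s * (1 - r) / (r * (1 - s)) = (r - s) / (r * (1 - s)) := by field_simp; ring
  have hz2 : |s * (1 - r) / (r * (1 - s))| < 1 := by
    have : 0 < (r - s) / (r * (1 - s)) := by positivity
    rw [abs_of_nonneg (by positivity)]; linarith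
  have eu := euler (a := (δ + 1) / 2) (b := (δ + 1) / 2 - 2) h5 hz2
  rw [show δ / 2 - (δ + 1) / 2 - ((δ + 1) / 2 - 2) = 1 - δ / 2 by ring,
    show δ / 2 - (δ + 1) / 2 = -(1/2) by ring, show δ / 2 - ((δ + 1) / 2 - 2) = 3/2 by ring, hz1] at eu
  have key := EE_bint (δ := δ) (a := (δ + 1) / 2) h5 hα hαβ (by ring) (by ring)
  rw [hz, eu] at key
  rw [Sigma_eq hδ hs hsr hr]
  simp only [d3]
  have : ∀ B : ℝ, ∫ b in Set.Ioi (0:ℝ), b ^ (δ - 1) * (B * deriv^[3] (EE (δ / 2) (s / (2 * r * (r - s)))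
      ((1 - s) / (2 * (r - s) * (1 - r)))) b) = B * ∫ b in Set.Ioi (0:ℝ), b ^ (δ - 1) *
      deriv^[3] (EE (δ / 2) (s / (2 * r * (r - s))) ((1 - s) / (2 * (r - s) * (1 - r)))) b := by
    intro B
    rw [← integral_const_mul]
    congr 1; funext b; ring
  rw [this, key, HH, Kcoef]
  have pid := pow_identity (c := δ / 2) hs hsr hr
  rw [show 2 - (δ + 1) / 2 = 3/2 - δ / 2 by ring]
  rw [mul_assoc (-(2 * Real.Gamma ((δ + 1) / 2) ^ 2 / Real.Gamma (δ / 2) ^ 2 / 4)), ← pid]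
  ring

lemma Sigma_symm {δ s r : ℝ} (hs : s ≠ r) : SigmaRS δ r s = SigmaRS δ (1 - r) (1 - s) := by
  funext b
  have hD : Dcoef s r = Dcoef (1 - s) (1 - r) := by
    unfold Dcoef
    rcases lt_or_gt_of_ne hs with h | h
    · rw [if_pos h, if_neg (by linarith)]
      congr 1; ring
    · rw [if_neg (by linarith), if_pos (by linarith)]
      congr 1 <;> ring
  have hf : ∀ k, fcoef s r k = fcoef (1 - s) (1 - r) k := by
    intro k
    unfold fcoef
    rcases lt_or_gt_of_ne hs with h | h
    · rw [if_pos h, if_neg (by linarith)]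
      congr 2 <;> ring
    · rw [if_neg (by linarith), if_pos (by linarith)]
      congr 2; ring
  unfold SigmaRS
  simp only [hD, hf]
  rw [show (1 - r) * (1 - (1 - r)) = r * (1 - r) by ring]

lemma twoPt_symm {δ s r : ℝ} (hs : s ≠ r) : twoPt δ s r = twoPt δ (1 - s) (1 - r) := by
  unfold twoPt
  rcases lt_or_gt_of_ne hs with h | h
  · rw [if_pos h, if_neg (by linarith)]
    ring_nf
  · rw [if_neg (by linarith), if_pos (by linarith)]
    ring_nf

noncomputable def FF (c z : ℝ) : ℝ := hyp2F1 (-(1/2)) (-(1/2)) c z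
noncomputable def F1 (c z : ℝ) : ℝ := hyp2F1 (1/2) (1/2) (c + 1) z
noncomputable def F2 (c z : ℝ) : ℝ := hyp2F1 (3/2) (3/2) (c + 1 + 1) z
noncomputable def gg (c z : ℝ) : ℝ := z * (1 / (4 * c) * F1 c z)
noncomputable def gg' (c z : ℝ) : ℝ :=
  1 / (4 * c) * F1 c z + z * (1 / (4 * c) * (1 / (4 * (c + 1)) * F2 c z))

lemma FF_hasDerivAt {c z : ℝ} (hc0 : 0 < c) (hz : |z| < 1) :
    HasDerivAt (FF c) (1 / (4 * c) * F1 c z) z := by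
  refine HasDerivAt.congr_deriv (f := FF c) (hyp_hasDerivAt hc0 hz) ?_
  rw [F1, show -(1/2) + 1 = (1/2:ℝ) by norm_num]
  congr 1
  field_simp; norm_num

lemma F1_hasDerivAt {c z : ℝ} (hc0 : 0 < c) (hz : |z| < 1) :
    HasDerivAt (F1 c) (1 / (4 * (c + 1)) * F2 c z) z := by
  refine HasDerivAt.congr_deriv (f := F1 c) (hyp_hasDerivAt (by linarith) hz) ?_
  rw [F2, show (1/2) + 1 = (3/2:ℝ) by norm_num]
  congr 1
  field_simp; norm_num

lemma gg_hasDerivAt {c z : ℝ} (hc0 : 0 < c) (hz : |z| < 1) : HasDerivAt (gg c) (gg' c z) z := by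
  refine HasDerivAt.congr_deriv (f := gg c)
    ((hasDerivAt_id z).mul ((F1_hasDerivAt hc0 hz).const_mul (1 / (4 * c)))) ?_
  simp [gg']

lemma F1_cont {c : ℝ} (hc0 : 0 < c) : ContinuousOn (F1 c) (Set.Icc 0 1) :=
  ps_cont (half_summable (by linarith))

lemma FF_summable {c : ℝ} (hc0 : 0 < c) : Summable (hc (-(1/2)) (-(1/2)) c) := by
  rw [← summable_nat_add_iff 1]
  have hs := (half_summable (d := c + 1) (by linarith)).mul_left (1 / (4 * c))
  refine Summable.of_norm_bounded hs fun k => ?_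
  have := hc_succ' (a := -(1/2)) (b := -(1/2)) hc0 k
  rw [show -(1/2) + 1 = (1/2:ℝ) by norm_num] at this
  have hp : 0 < hc (1/2) (1/2) (c + 1) k := hc_pos (by norm_num) (by norm_num) (by linarith) k
  have hk : (0:ℝ) ≤ k := by positivity
  have e : hc (-(1/2)) (-(1/2)) c (k + 1) = 1 / (4 * c) * hc (1/2) (1/2) (c + 1) k / (k + 1) := by
    rw [eq_div_iff (by positivity), mul_comm, this]
    congr 1; field_simp; norm_num
  rw [e, Real.norm_eq_abs, abs_of_nonneg (by positivity)]
  exact div_le_self (by positivity) (by linarith)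

lemma FF_cont {c : ℝ} (hc0 : 0 < c) : ContinuousOn (FF c) (Set.Icc 0 1) :=
  ps_cont (FF_summable hc0)

lemma gg_cont {c : ℝ} (hc0 : 0 < c) : ContinuousOn (gg c) (Set.Icc 0 1) :=
  continuousOn_id.mul (continuousOn_const.mul (F1_cont hc0))

lemma gg'_nonneg {c z : ℝ} (hc0 : 0 < c) (hz : 0 ≤ z) : 0 ≤ gg' c z := by
  have h1 : 0 ≤ F1 c z := tsum_nonneg fun k =>
    mul_nonneg (hc_pos (a := 1/2) (b := 1/2) (c := c + 1) (by norm_num) (by norm_num) (by linarith) k).le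
      (pow_nonneg hz k)
  have h2 : 0 ≤ F2 c z := tsum_nonneg fun k =>
    mul_nonneg (hc_pos (a := 3/2) (b := 3/2) (c := c + 1 + 1) (by norm_num) (by norm_num) (by linarith) k).le
      (pow_nonneg hz k)
  unfold gg'; positivity

lemma K_gg_one {δ : ℝ} (hδ : 0 < δ) : Kcoef δ * gg (δ / 2) 1 = 1 / 2 := by
  have h := gauss (d := δ / 2 + 1) (by linarith)
  have e : F1 (δ / 2) 1 = gaussP (δ / 2 + 1) := by
    rw [← h, F1, hyp_eq]; simp
  have h1 : 0 < δ / 2 := by positivity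
  have := Real.Gamma_pos_of_pos h1
  have := Real.Gamma_pos_of_pos (by positivity : 0 < (δ + 1) / 2)
  rw [gg, e, gaussP, Kcoef, Real.Gamma_add_one h1.ne', show δ / 2 + 1 - 1 = δ / 2 by ring,
    show δ / 2 + 1 - 1 / 2 = (δ + 1) / 2 by ring]
  field_simp
  norm_num

lemma poch_half (k : ℕ) : ((k:ℝ) ^ 2 - 1/4) * poch (-(1/2)) k = -(1/4) * poch (3/2) k := by
  induction k with
  | zero => simp [poch_zero]
  | succ k ih =>
    rw [poch_succ, poch_succ]
    push_cast
    linear_combination ((k:ℝ) + 3/2) * ih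

lemma gg_ode {c z : ℝ} (hc0 : 0 < c) (hz : |z| < 1) :
    z * gg' c z - FF c z / 4 = -(1/4) * hyp2F1 (-(1/2)) (3/2) c z := by
  have hc1 : 0 < c + 1 := by linarith
  have hc2 : 0 < c + 1 + 1 := by linarith
  have S0 : HasSum _ (FF c z) := (hc_summable (a := -(1/2)) (b := -(1/2)) hc0 hz).hasSum
  have S1 : HasSum _ (z * (1 / (4 * c) * F1 c z)) :=
    ((hc_summable (a := 1/2) (b := 1/2) hc1 hz).hasSum.mul_left (1 / (4 * c))).mul_left z
  have S2 : HasSum _ (z * (z * (1 / (4 * c) * (1 / (4 * (c + 1)) * F2 c z)))) :=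
    ((((hc_summable (a := 3/2) (b := 3/2) hc2 hz).hasSum.mul_left
    (1 / (4 * (c + 1)))).mul_left (1 / (4 * c))).mul_left z).mul_left z
  have q1 : ∀ k : ℕ, ((k:ℝ) + 1) * hc (-(1/2)) (-(1/2)) c (k + 1) =
      1 / (4 * c) * hc (1/2) (1/2) (c + 1) k := by
    intro k
    have := hc_succ' (a := -(1/2)) (b := -(1/2)) hc0 k
    rw [show -(1/2) + 1 = (1/2:ℝ) by norm_num] at this
    rw [this]; congr 1; field_simp; norm_num
  have q2 : ∀ k : ℕ, ((k:ℝ) + 1) * hc (1/2) (1/2) (c + 1) (k + 1) =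
      1 / (4 * (c + 1)) * hc (3/2) (3/2) (c + 1 + 1) k := by
    intro k
    have := hc_succ' (a := 1/2) (b := 1/2) hc1 k
    rw [show (1/2) + 1 = (3/2:ℝ) by norm_num] at this
    rw [this]; congr 1; field_simp; norm_num
  have T1 : HasSum (fun k : ℕ => (k:ℝ) * hc (-(1/2)) (-(1/2)) c k * z ^ k)
      (z * (1 / (4 * c) * F1 c z)) := by
    refine hasSum_shift (S1.congr_fun fun k => ?_) (by simp)
    push_cast
    rw [q1, pow_succ]; ring
  have T2 : HasSum (fun k : ℕ => (k:ℝ) * ((k:ℝ) - 1) * hc (-(1/2)) (-(1/2)) c k * z ^ k)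
      (z * (z * (1 / (4 * c) * (1 / (4 * (c + 1)) * F2 c z)))) := by
    refine hasSum_shift (hasSum_shift (S2.congr_fun fun k => ?_) (by simp)) (by simp)
    have a1 := q1 (k + 1)
    have a2 := q2 k
    push_cast at a1 ⊢
    rw [pow_succ, pow_succ]
    linear_combination (z ^ k * z * z) * (((k:ℝ) + 1) * a1 + 1 / (4 * c) * a2)
  have tot := (T1.add T2).sub (S0.mul_right (1/4))
  have fin : HasSum _ (-(1/4) * hyp2F1 (-(1/2)) (3/2) c z) :=
    (hc_summable (a := -(1/2)) (b := 3/2) hc0 hz).hasSum.mul_left (-(1/4))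
  have := tot.unique (fin.congr_fun fun k => ?_)
  · rw [← this, gg']; ring
  · have p := poch_half k
    unfold hc
    linear_combination (poch (-(1/2)) k / ((Nat.factorial k : ℝ) * poch c k) * z ^ k) * p

noncomputable def zz (s r : ℝ) : ℝ := s * (1 - r) / (r * (1 - s))
noncomputable def uu (r : ℝ) : ℝ := Real.sqrt (r * (1 - r))

noncomputable def GG (δ s r : ℝ) : ℝ := Kcoef δ * uu s * (uu r * FF (δ / 2) (zz s r))
noncomputable def GGr (δ s r : ℝ) : ℝ :=
  Kcoef δ * uu s * ((1 - 2 * r) / (2 * uu r) * FF (δ / 2) (zz s r) - gg (δ / 2) (zz s r) / uu r)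

lemma uu_pos {r : ℝ} (h0 : 0 < r) (h1 : r < 1) : 0 < uu r :=
  Real.sqrt_pos.2 (mul_pos h0 (by linarith))

lemma uu_sq {r : ℝ} (h0 : 0 < r) (h1 : r < 1) : uu r ^ 2 = r * (1 - r) :=
  Real.sq_sqrt (mul_pos h0 (by linarith)).le

lemma one_sub_zz {s r : ℝ} (h1 : s < 1) (hr0 : 0 < r) :
    1 - zz s r = (r - s) / (r * (1 - s)) := by
  have : 0 < 1 - s := by linarith
  unfold zz; field_simp; ring

lemma zz_mem {s r : ℝ} (hs : 0 < s) (hsr : s ≤ r) (hr : r < 1) : zz s r ∈ Set.Icc (0:ℝ) 1 := by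
  have h1 : 0 ≤ r - s := by linarith
  have h2 : 0 < 1 - r := by linarith
  have h3 : 0 < 1 - s := by linarith
  have h4 : 0 < r := by linarith
  have := one_sub_zz (by linarith : s < 1) h4
  have h5 : 0 ≤ (r - s) / (r * (1 - s)) := by positivity
  refine ⟨?_, by linarith⟩
  unfold zz; positivity

lemma zz_abs {s r : ℝ} (hs : 0 < s) (hsr : s < r) (hr : r < 1) : |zz s r| < 1 := by
  have h1 : 0 < r - s := by linarith
  have h3 : 0 < 1 - s := by linarith
  have h4 : 0 < r := by linarith
  have := one_sub_zz (by linarith : s < 1) h4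
  have h5 : 0 < (r - s) / (r * (1 - s)) := by positivity
  rw [abs_of_nonneg (zz_mem hs hsr.le hr).1]; linarith

lemma zz_self {s : ℝ} (hs : 0 < s) (hs1 : s < 1) : zz s s = 1 := by
  have h3 : 0 < 1 - s := by linarith
  unfold zz; field_simp

lemma zz_hasDerivAt {s r : ℝ} (hs1 : s < 1) (hr : 0 < r) (hr1 : r < 1) :
    HasDerivAt (zz s) (-(zz s r / (uu r) ^ 2)) r := by
  have h3 : 0 < 1 - s := by linarith
  have h4 : 0 < 1 - r := by linarith
  have := (((hasDerivAt_id r).const_sub 1).const_mul s).div ((hasDerivAt_id r).mul_const (1 - s))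
    (by simp; constructor <;> linarith)
  refine HasDerivAt.congr_deriv (f := zz s) this ?_
  rw [uu_sq hr hr1, zz]
  simp only [id]
  field_simp
  ring

lemma uu_hasDerivAt {r : ℝ} (hr : 0 < r) (hr1 : r < 1) :
    HasDerivAt uu ((1 - 2 * r) / (2 * uu r)) r := by
  have h4 : 0 < 1 - r := by linarith
  have := ((hasDerivAt_id r).mul ((hasDerivAt_id r).const_sub 1)).sqrt
    (by simp; constructor <;> linarith)
  refine HasDerivAt.congr_deriv (f := uu) this ?_
  simp only [id, uu, Pi.mul_apply]
  congr 1; ring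

lemma twoPt_eq {δ s r : ℝ} (hδ : 0 < δ) (hs : 0 < s) (hsr : s < r) (hr : r < 1) :
    twoPt δ s r = GG δ s r := by
  have h1 : 0 < r - s := by linarith
  have h2 : 0 < 1 - r := by linarith
  have h3 : 0 < 1 - s := by linarith
  have h4 : 0 < r := by linarith
  have eu := euler (a := (δ + 1) / 2) (b := (δ + 1) / 2) (by positivity : 0 < δ / 2) (zz_abs hs hsr hr)
  rw [show δ / 2 - (δ + 1) / 2 - (δ + 1) / 2 = -(δ / 2 + 1) by ring,
    show δ / 2 - (δ + 1) / 2 = -(1/2) by ring, one_sub_zz (by linarith) h4] at eu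
  rw [twoPt, if_pos hsr, show s * (1 - r) / (r * (1 - s)) = zz s r from rfl, eu, GG, FF]
  have pid : (r - s) ^ (δ / 2 + 1) * (s * (1 - r)) ^ ((1 : ℝ) / 2) *
      (r * (1 - s)) ^ (-((δ + 1) / 2)) * ((r - s) / (r * (1 - s))) ^ (-(δ / 2 + 1)) = uu s * uu r := by
    rw [uu, uu, Real.sqrt_eq_rpow, Real.sqrt_eq_rpow]
    rw [Real.rpow_def_of_pos (by positivity), Real.rpow_def_of_pos (by positivity),
      Real.rpow_def_of_pos (by positivity), Real.rpow_def_of_pos (by positivity),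
      Real.rpow_def_of_pos (by positivity), Real.rpow_def_of_pos (by positivity)]
    rw [Real.log_mul hs.ne' h2.ne', Real.log_mul h4.ne' h3.ne', Real.log_div h1.ne' (by positivity),
      Real.log_mul h4.ne' h3.ne', Real.log_mul hs.ne' h3.ne', Real.log_mul h4.ne' h2.ne']
    simp only [← Real.exp_add]
    congr 1
    ring
  linear_combination (Kcoef δ * hyp2F1 (-(1/2)) (-(1/2)) (δ / 2) (zz s r)) * pid

lemma HH_eq {δ s r : ℝ} (hδ : 0 < δ) (hs : 0 < s) (hsr : s < r) (hr : r < 1) :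
    HH δ s r = Kcoef δ * uu s * ((zz s r * gg' (δ / 2) (zz s r) - FF (δ / 2) (zz s r) / 4) / uu r ^ 3) := by
  have h2 : 0 < 1 - r := by linarith
  have h3 : 0 < 1 - s := by linarith
  have h4 : 0 < r := by linarith
  have e1 : (r * (1 - r)) ^ (-(3/2) : ℝ) = 1 / uu r ^ 3 := by
    rw [uu, Real.sqrt_eq_rpow, ← Real.rpow_natCast, ← Real.rpow_mul (by positivity),
      Real.rpow_neg (by positivity), one_div]
    norm_num
  rw [gg_ode (by positivity) (zz_abs hs hsr hr), HH, e1, ← Real.sqrt_eq_rpow]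
  show _ * (uu s) * hyp2F1 _ _ _ (zz s r) = _
  ring

lemma GG_hasDerivAt {δ s r : ℝ} (hδ : 0 < δ) (hs : 0 < s) (hsr : s < r) (hr : r < 1) :
    HasDerivAt (GG δ s) (GGr δ s r) r := by
  have h4 : 0 < r := by linarith
  have hu := uu_pos h4 hr
  have hF := (FF_hasDerivAt (by positivity : 0 < δ / 2) (zz_abs hs hsr hr)).comp r
    (zz_hasDerivAt (by linarith) h4 hr)
  have := ((uu_hasDerivAt h4 hr).mul hF).const_mul (Kcoef δ * uu s)
  refine HasDerivAt.congr_deriv (f := GG δ s) this ?_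
  simp only [GGr, gg, Function.comp]
  field_simp
  ring

lemma GGr_hasDerivAt {δ s r : ℝ} (hδ : 0 < δ) (hs : 0 < s) (hsr : s < r) (hr : r < 1) :
    HasDerivAt (GGr δ s) (HH δ s r) r := by
  have h4 : 0 < r := by linarith
  have hu := uu_pos h4 hr
  have hz := zz_hasDerivAt (s := s) (by linarith) h4 hr
  have hF := (FF_hasDerivAt (by positivity : 0 < δ / 2) (zz_abs hs hsr hr)).comp r hz
  have hg := (gg_hasDerivAt (by positivity : 0 < δ / 2) (zz_abs hs hsr hr)).comp r hz
  have hU := uu_hasDerivAt h4 hr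
  have hn : HasDerivAt (fun r : ℝ => 1 - 2 * r) (-2) r := by
    simpa using ((hasDerivAt_id r).const_mul 2).const_sub 1
  have hq := hn.div (hU.const_mul 2) (by positivity)
  have := ((hq.mul hF).sub (hg.div hU hu.ne')).const_mul (Kcoef δ * uu s)
  refine HasDerivAt.congr_deriv (f := GGr δ s) this ?_
  rw [HH_eq hδ hs hsr hr]
  have hsq := uu_sq h4 hr
  have e : zz s r * (1 / (4 * (δ / 2)) * F1 (δ / 2) (zz s r)) = gg (δ / 2) (zz s r) := rfl
  simp only [Function.comp, Pi.div_apply]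
  have e2 : 1 / (4 * (δ / 2)) * F1 (δ / 2) (zz s r) * -(zz s r / uu r ^ 2) =
      - gg (δ / 2) (zz s r) / uu r ^ 2 := by rw [← e]; ring
  rw [e2]
  have hr2 : (1 - 2 * r) ^ 2 = 1 - 4 * uu r ^ 2 := by rw [hsq]; ring
  field_simp
  linear_combination (-(4:ℝ)) * Kcoef δ * uu s * FF (δ / 2) (zz s r) * hr2

lemma zz_contOn {s t : ℝ} (hs : 0 < s) (ht : t < 1) (hst : s < t) :
    ContinuousOn (zz s) (Set.Icc s t) := fun r hr =>
  (zz_hasDerivAt (by linarith) (by linarith [hr.1]) (by linarith [hr.2])).continuousAt.continuousWithinAt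

lemma uu_cont : Continuous uu := by unfold uu; fun_prop

lemma zz_maps {s t : ℝ} (hs : 0 < s) (ht : t < 1) :
    Set.MapsTo (zz s) (Set.Icc s t) (Set.Icc 0 1) := fun r hr =>
  zz_mem hs hr.1 (by linarith [hr.2])

lemma GG_contOn {δ s t : ℝ} (hδ : 0 < δ) (hs : 0 < s) (ht : t < 1) (hst : s < t) :
    ContinuousOn (GG δ s) (Set.Icc s t) :=
  continuousOn_const.mul (uu_cont.continuousOn.mul
    ((FF_cont (by positivity)).comp (zz_contOn hs ht hst) (zz_maps hs ht)))

lemma GGr_contOn {δ s t : ℝ} (hδ : 0 < δ) (hs : 0 < s) (ht : t < 1) (hst : s < t) :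
    ContinuousOn (GGr δ s) (Set.Icc s t) := by
  have hu : ∀ r ∈ Set.Icc s t, uu r ≠ 0 := fun r hr =>
    (uu_pos (by linarith [hr.1]) (by linarith [hr.2])).ne'
  refine continuousOn_const.mul (ContinuousOn.sub (ContinuousOn.mul (ContinuousOn.div ?_ ?_ ?_) ?_)
    (ContinuousOn.div ?_ uu_cont.continuousOn hu))
  · fun_prop
  · exact (continuous_const.mul uu_cont).continuousOn
  · intro r hr; exact mul_ne_zero (by norm_num) (hu r hr)
  · exact (FF_cont (by positivity)).comp (zz_contOn hs ht hst) (zz_maps hs ht)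
  · exact (gg_cont (by positivity)).comp (zz_contOn hs ht hst) (zz_maps hs ht)

lemma HH_int {δ s t : ℝ} (hδ : 0 < δ) (hs : 0 < s) (ht : t < 1) (hst : s < t) :
    IntervalIntegrable (HH δ s) volume s t := by
  have hu : ∀ r ∈ Set.Icc s t, uu r ≠ 0 := fun r hr =>
    (uu_pos (by linarith [hr.1]) (by linarith [hr.2])).ne'
  have hc0 : 0 < δ / 2 := by positivity
  have hgc : ContinuousOn (fun r => -(gg (δ / 2) (zz s r))) (Set.Icc s t) :=
    ((gg_cont hc0).comp (zz_contOn hs ht hst) (zz_maps hs ht)).neg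
  have I1 := intervalIntegral.integrableOn_deriv_of_nonneg (a := s) (b := t) hgc
    (g' := fun r => gg' (δ / 2) (zz s r) * (zz s r / uu r ^ 2))
    (fun r hr => by
      have hr0 : 0 < r := by linarith [hr.1]
      have hr1 : r < 1 := by linarith [hr.2]
      have := ((gg_hasDerivAt hc0 (zz_abs hs hr.1 hr1)).comp r
        (zz_hasDerivAt (by linarith [hr.1]) hr0 hr1)).neg
      exact this.congr_deriv (by ring))
    (fun r hr => by
      have h0 := (zz_mem hs hr.1.le (by linarith [hr.2])).1
      exact mul_nonneg (gg'_nonneg hc0 h0) (by positivity))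
  have I1' : IntervalIntegrable (fun r => gg' (δ / 2) (zz s r) * (zz s r / uu r ^ 2)) volume s t :=
    (intervalIntegrable_iff_integrableOn_Ioc_of_le hst.le).2 I1
  have c1 : ContinuousOn (fun r => Kcoef δ * uu s / uu r) (Set.uIcc s t) := by
    rw [Set.uIcc_of_le hst.le]
    exact continuousOn_const.div uu_cont.continuousOn hu
  have c2 : ContinuousOn (fun r => Kcoef δ * uu s * (FF (δ / 2) (zz s r) / 4) / uu r ^ 3)
      (Set.uIcc s t) := by
    rw [Set.uIcc_of_le hst.le]
    refine ContinuousOn.div (continuousOn_const.mul (ContinuousOn.div_const ?_ _))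
      (uu_cont.pow 3).continuousOn (fun r hr => pow_ne_zero _ (hu r hr))
    exact (FF_cont (by positivity)).comp (zz_contOn hs ht hst) (zz_maps hs ht)
  have := (I1'.continuousOn_mul c1).sub c2.intervalIntegrable
  refine (intervalIntegrable_iff_integrableOn_Ioo_of_le hst.le).2 ?_
  refine IntegrableOn.congr_fun ((intervalIntegrable_iff_integrableOn_Ioo_of_le hst.le).1 this)
    (fun r hr => ?_) measurableSet_Ioo
  have := hu r (Set.Ioo_subset_Icc_self hr)
  rw [HH_eq hδ hs hr.1 (by linarith [hr.2])]
  field_simp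

lemma half_t {δ s t : ℝ} (hδ : 0 < δ) (hs : 0 < s) (ht : t < 1) (hst : s < t) {h : ℝ → ℝ}
    (hh : ContDiff ℝ 2 h) (h0 : h t = 0) (h1 : deriv h t = 0) :
    IntervalIntegrable (fun r => h r * HH δ s r) volume s t ∧
    IntervalIntegrable (fun r => deriv (deriv h) r * GG δ s r) volume s t ∧
    ∫ r in s..t, deriv (deriv h) r * GG δ s r =
      (∫ r in s..t, h r * HH δ s r) - deriv h s * GG δ s s + h s * GGr δ s s := by
  have hd1 : ContDiff ℝ 1 (deriv h) := ((contDiff_succ_iff_deriv (n := 1)).1 hh).2.2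
  have hd2 : Continuous (deriv (deriv h)) := hd1.continuous_deriv (by norm_num)
  have A : IntervalIntegrable (fun r => h r * HH δ s r) volume s t :=
    (HH_int hδ hs ht hst).continuousOn_mul hh.continuous.continuousOn
  have B : IntervalIntegrable (fun r => deriv (deriv h) r * GG δ s r) volume s t := by
    refine ContinuousOn.intervalIntegrable ?_
    rw [Set.uIcc_of_le hst.le]
    exact hd2.continuousOn.mul (GG_contOn hδ hs ht hst)
  refine ⟨A, B, ?_⟩
  have key := intervalIntegral.integral_eq_sub_of_hasDerivAt_of_le (a := s) (b := t)
    (f := fun r => deriv h r * GG δ s r - h r * GGr δ s r)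
    (f' := fun r => deriv (deriv h) r * GG δ s r - h r * HH δ s r) hst.le
    ((hd1.continuous.continuousOn.mul (GG_contOn hδ hs ht hst)).sub
      (hh.continuous.continuousOn.mul (GGr_contOn hδ hs ht hst)))
    (fun r hr => by
      have hr1 : r < 1 := by linarith [hr.2]
      have d1 : HasDerivAt h (deriv h r) r := (hh.differentiable (by norm_num) r).hasDerivAt
      have d2 : HasDerivAt (deriv h) (deriv (deriv h) r) r :=
        (hd1.differentiable (by norm_num) r).hasDerivAt
      refine ((d2.mul (GG_hasDerivAt hδ hs hr.1 hr1)).sub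
        (d1.mul (GGr_hasDerivAt hδ hs hr.1 hr1))).congr_deriv ?_
      ring)
    (B.sub A)
  rw [intervalIntegral.integral_sub B A] at key
  simp only [h0, h1] at key
  linarith

lemma GG_diag {δ s : ℝ} (hs : 0 < s) (hs1 : s < 1) :
    GG δ s s = Kcoef δ * FF (δ / 2) 1 * (s * (1 - s)) := by
  rw [GG, zz_self hs hs1, ← uu_sq hs hs1]; ring

lemma GGr_diag {δ s : ℝ} (hδ : 0 < δ) (hs : 0 < s) (hs1 : s < 1) :
    GGr δ s s = Kcoef δ * FF (δ / 2) 1 * (1/2 - s) - 1/2 := by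
  have := uu_pos hs hs1
  have k := K_gg_one hδ
  have e : Kcoef δ * FF (δ / 2) 1 * (1/2 - s) - 1/2 =
      Kcoef δ * FF (δ / 2) 1 * (1/2 - s) - Kcoef δ * gg (δ / 2) 1 := by rw [k]
  rw [GGr, zz_self hs hs1, e]
  field_simp

lemma right_half {δ s : ℝ} (hδ : 0 < δ) (hs : 0 < s) (hs1 : s < 1) {h : ℝ → ℝ}
    (hh : ContDiff ℝ 2 h) (hsupp : tsupport h ⊆ Set.Ioo 0 1) :
    IntervalIntegrable (fun r => h r * HH δ s r) volume s 1 ∧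
    IntervalIntegrable (fun r => deriv (deriv h) r * twoPt δ s r) volume s 1 ∧
    ∫ r in s..1, deriv (deriv h) r * twoPt δ s r =
      (∫ r in s..1, h r * HH δ s r) - deriv h s * (Kcoef δ * FF (δ / 2) 1 * (s * (1 - s)))
        + h s * (Kcoef δ * FF (δ / 2) 1 * (1/2 - s) - 1/2) := by
  obtain ⟨t, hst, ht, hz⟩ : ∃ t, s < t ∧ t < 1 ∧ ∀ r, t ≤ r → r ∉ tsupport h := by
    have ho : IsOpen (tsupport h)ᶜ := (isClosed_tsupport h).isOpen_compl
    have h1 : (1:ℝ) ∈ (tsupport h)ᶜ := fun hm => lt_irrefl _ (hsupp hm).2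
    obtain ⟨ε, he, hb⟩ := Metric.isOpen_iff.1 ho 1 h1
    refine ⟨max (1 - ε / 2) ((1 + s) / 2), ?_, ?_, ?_⟩
    · exact lt_max_of_lt_right (by linarith)
    · exact max_lt (by linarith) (by linarith)
    · intro r hr hm
      have hr1 := (hsupp hm).2
      have := le_trans (le_max_left _ _) hr
      refine hb (a := r) ?_ hm
      rw [Metric.mem_ball, Real.dist_eq, abs_lt]; constructor <;> linarith
  have z0 : ∀ r, t ≤ r → h r = 0 := fun r hr => image_eq_zero_of_notMem_tsupport (hz r hr)
  have z1 : ∀ r, t ≤ r → deriv h r = 0 := fun r hr =>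
    image_eq_zero_of_notMem_tsupport fun hm => hz r hr (tsupport_deriv_subset (𝕜 := ℝ) hm)
  have z2 : ∀ r, t ≤ r → deriv (deriv h) r = 0 := fun r hr =>
    image_eq_zero_of_notMem_tsupport fun hm => hz r hr
      (tsupport_deriv_subset (𝕜 := ℝ) (tsupport_deriv_subset (𝕜 := ℝ) hm))
  obtain ⟨A, B, C⟩ := half_t hδ hs ht hst hh (z0 t le_rfl) (z1 t le_rfl)
  have Bc : ∀ r ∈ Set.Ioo s t, deriv (deriv h) r * GG δ s r = deriv (deriv h) r * twoPt δ s r :=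
    fun r hr => by rw [twoPt_eq hδ hs hr.1 (by linarith [hr.2])]
  have B' : IntervalIntegrable (fun r => deriv (deriv h) r * twoPt δ s r) volume s t :=
    (intervalIntegrable_iff_integrableOn_Ioo_of_le hst.le).2
      (IntegrableOn.congr_fun ((intervalIntegrable_iff_integrableOn_Ioo_of_le hst.le).1 B) Bc
        measurableSet_Ioo)
  have E : ∫ r in s..t, deriv (deriv h) r * GG δ s r = ∫ r in s..t, deriv (deriv h) r * twoPt δ s r := by
    rw [intervalIntegral.integral_of_le hst.le, intervalIntegral.integral_of_le hst.le,
      integral_Ioc_eq_integral_Ioo, integral_Ioc_eq_integral_Ioo]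
    exact setIntegral_congr_fun measurableSet_Ioo Bc
  have zA : ∀ r ∈ Set.uIcc t 1, h r * HH δ s r = 0 := by
    intro r hr; rw [Set.uIcc_of_le ht.le] at hr; rw [z0 r hr.1, zero_mul]
  have zB : ∀ r ∈ Set.uIcc t 1, deriv (deriv h) r * twoPt δ s r = 0 := by
    intro r hr; rw [Set.uIcc_of_le ht.le] at hr; rw [z2 r hr.1, zero_mul]
  have A2 : IntervalIntegrable (fun r => h r * HH δ s r) volume t 1 :=
    (continuousOn_const (c := (0:ℝ))).congr zA |>.intervalIntegrable
  have B2 : IntervalIntegrable (fun r => deriv (deriv h) r * twoPt δ s r) volume t 1 :=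
    (continuousOn_const (c := (0:ℝ))).congr zB |>.intervalIntegrable
  have iA : ∫ r in t..1, h r * HH δ s r = 0 := by
    rw [intervalIntegral.integral_congr zA]; simp
  have iB : ∫ r in t..1, deriv (deriv h) r * twoPt δ s r = 0 := by
    rw [intervalIntegral.integral_congr zB]; simp
  refine ⟨A.trans A2, B'.trans B2, ?_⟩
  rw [← intervalIntegral.integral_add_adjacent_intervals A A2,
    ← intervalIntegral.integral_add_adjacent_intervals B' B2, iA, iB, ← E, C, GG_diag hs hs1,
    GGr_diag hδ hs hs1]
  ring

lemma ii_congr {f g : ℝ → ℝ} {a b : ℝ} (hab : a ≤ b) (h : ∀ x ∈ Set.Ioo a b, f x = g x) :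
    ∫ x in a..b, f x = ∫ x in a..b, g x := by
  rw [intervalIntegral.integral_of_le hab, intervalIntegral.integral_of_le hab,
    integral_Ioc_eq_integral_Ioo, integral_Ioc_eq_integral_Ioo]
  exact setIntegral_congr_fun measurableSet_Ioo h

lemma ii_int_congr {f g : ℝ → ℝ} {a b : ℝ} (hab : a ≤ b) (h : ∀ x ∈ Set.Ioo a b, f x = g x)
    (hf : IntervalIntegrable f volume a b) : IntervalIntegrable g volume a b :=
  (intervalIntegrable_iff_integrableOn_Ioo_of_le hab).2
      (IntegrableOn.congr_fun ((intervalIntegrable_iff_integrableOn_Ioo_of_le hab).1 hf) h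
        measurableSet_Ioo)

/-- the inner `b`-integral -/
noncomputable def JJ (δ s r : ℝ) : ℝ :=
  ∫ b in Set.Ioi (0:ℝ), b ^ (δ - 1) * deriv^[3] (SigmaRS δ r s) b

lemma JJ_symm {δ s r : ℝ} (h : s ≠ r) : JJ δ s r = JJ δ (1 - s) (1 - r) := by
  unfold JJ; rw [Sigma_symm h]

lemma right_half' {δ s : ℝ} (hδ : 0 < δ) (hδ2 : δ ≠ 2) (hs : 0 < s) (hs1 : s < 1) {h : ℝ → ℝ}
    (hh : ContDiff ℝ 2 h) (hsupp : tsupport h ⊆ Set.Ioo 0 1) :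
    IntervalIntegrable (fun r => h r * (1 / (4 * (δ - 2)) * JJ δ s r)) volume s 1 ∧
    IntervalIntegrable (fun r => deriv (deriv h) r * twoPt δ s r) volume s 1 ∧
    ∫ r in s..1, deriv (deriv h) r * twoPt δ s r =
      (∫ r in s..1, h r * (1 / (4 * (δ - 2)) * JJ δ s r))
        - deriv h s * (Kcoef δ * FF (δ / 2) 1 * (s * (1 - s)))
        + h s * (Kcoef δ * FF (δ / 2) 1 * (1/2 - s) - 1/2) := by
  obtain ⟨A, B, C⟩ := right_half hδ hs hs1 hh hsupp
  have hne : δ - 2 ≠ 0 := sub_ne_zero.2 hδ2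
  have e : ∀ r ∈ Set.Ioo s 1, h r * HH δ s r = h r * (1 / (4 * (δ - 2)) * JJ δ s r) := by
    intro r hr
    rw [JJ, J_eq hδ hs hr.1 hr.2]
    field_simp
  exact ⟨ii_int_congr hs1.le e A, B, by rw [C, ii_congr hs1.le e]⟩

lemma left_half' {δ s : ℝ} (hδ : 0 < δ) (hδ2 : δ ≠ 2) (hs : 0 < s) (hs1 : s < 1) {h : ℝ → ℝ}
    (hh : ContDiff ℝ 2 h) (hsupp : tsupport h ⊆ Set.Ioo 0 1) :
    IntervalIntegrable (fun r => h r * (1 / (4 * (δ - 2)) * JJ δ s r)) volume 0 s ∧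
    IntervalIntegrable (fun r => deriv (deriv h) r * twoPt δ s r) volume 0 s ∧
    ∫ r in 0..s, deriv (deriv h) r * twoPt δ s r =
      (∫ r in 0..s, h r * (1 / (4 * (δ - 2)) * JJ δ s r))
        + deriv h s * (Kcoef δ * FF (δ / 2) 1 * (s * (1 - s)))
        + h s * (-(Kcoef δ * FF (δ / 2) 1 * (1/2 - s)) - 1/2) := by
  have hk : ContDiff ℝ 2 (fun x => h (1 - x)) := hh.comp (contDiff_const.sub contDiff_id)
  have hks : tsupport (fun x => h (1 - x)) ⊆ Set.Ioo 0 1 := by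
    have : tsupport (fun x => h (1 - x)) ⊆ (fun x : ℝ => 1 - x) ⁻¹' tsupport h :=
      tsupport_comp_subset_preimage h (f := fun x : ℝ => 1 - x) (by fun_prop)
    intro x hx
    have := hsupp (this hx)
    simp only [Set.mem_Ioo] at this ⊢
    constructor <;> linarith [this.1, this.2]
  have d1 : deriv (fun x => h (1 - x)) = fun x => -deriv h (1 - x) :=
    funext fun x => deriv_comp_const_sub 1 x (f := h)
  have d2 : deriv (deriv (fun x => h (1 - x))) = fun x => deriv (deriv h) (1 - x) := by
    rw [d1]; funext x
    rw [deriv.fun_neg, deriv_comp_const_sub 1 x (f := deriv h), neg_neg]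
  obtain ⟨A, B, C⟩ := right_half' (s := 1 - s) hδ hδ2 (by linarith) (by linarith) hk hks
  rw [d2] at B C
  rw [d1] at C
  simp only [sub_sub_cancel] at C
  have hle : 1 - s ≤ 1 := by linarith
  have eA : ∀ r ∈ Set.Ioo (1 - s) 1, h (1 - r) * (1 / (4 * (δ - 2)) * JJ δ (1 - s) r) =
      (fun x => h x * (1 / (4 * (δ - 2)) * JJ δ s x)) (1 - r) := by
    intro r hr
    have : s ≠ 1 - r := by intro h; linarith [hr.1]
    simp only
    rw [JJ_symm this, sub_sub_cancel]
  have eB : ∀ r ∈ Set.Ioo (1 - s) 1, deriv (deriv h) (1 - r) * twoPt δ (1 - s) r =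
      (fun x => deriv (deriv h) x * twoPt δ s x) (1 - r) := by
    intro r hr
    have : s ≠ 1 - r := by intro h; linarith [hr.1]
    simp only
    rw [twoPt_symm this, sub_sub_cancel]
  have A' := (ii_int_congr hle eA A).comp_sub_left 1
  have B' := (ii_int_congr hle eB B).comp_sub_left 1
  simp only [sub_sub_cancel, sub_self] at A' B'
  rw [ii_congr hle eA, ii_congr hle eB,
    intervalIntegral.integral_comp_sub_left (fun x => deriv (deriv h) x * twoPt δ s x) 1,
    intervalIntegral.integral_comp_sub_left (fun x => h x * (1 / (4 * (δ - 2)) * JJ δ s x)) 1] at C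
  simp only [sub_sub_cancel, sub_self] at C
  exact ⟨A'.symm, B'.symm, by rw [C]; ring⟩

lemma pointwise {δ s : ℝ} (hδ : 0 < δ) (hδ2 : δ ≠ 2) (hs : 0 < s) (hs1 : s < 1) {h : ℝ → ℝ}
    (hh : ContDiff ℝ 2 h) (hsupp : tsupport h ⊆ Set.Ioo 0 1) :
    ∫ r in (0:ℝ)..1, h r * JJ δ s r =
      4 * (δ - 2) * (h s + ∫ r in (0:ℝ)..1, deriv (deriv h) r * twoPt δ s r) := by
  have hne : δ - 2 ≠ 0 := sub_ne_zero.2 hδ2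
  obtain ⟨A, B, C⟩ := right_half' hδ hδ2 hs hs1 hh hsupp
  obtain ⟨A', B', C'⟩ := left_half' hδ hδ2 hs hs1 hh hsupp
  have e1 := intervalIntegral.integral_add_adjacent_intervals A' A
  have e2 := intervalIntegral.integral_add_adjacent_intervals B' B
  have e3 : ∫ r in (0:ℝ)..1, h r * (1 / (4 * (δ - 2)) * JJ δ s r) =
      1 / (4 * (δ - 2)) * ∫ r in (0:ℝ)..1, h r * JJ δ s r := by
    rw [← intervalIntegral.integral_const_mul]; congr 1; funext r; ring
  have : h s + ∫ r in (0:ℝ)..1, deriv (deriv h) r * twoPt δ s r =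
      1 / (4 * (δ - 2)) * ∫ r in (0:ℝ)..1, h r * JJ δ s r := by
    rw [← e3, ← e1, ← e2, C, C']; ring
  rw [this]; field_simp

/-- globally measurable version of the kernel -/
noncomputable def GM (δ s r : ℝ) : ℝ :=
  Kcoef δ * uu s * (uu r * (FF (δ / 2) (Set.projIcc (0:ℝ) 1 zero_le_one
    (if s < r then zz s r else zz r s))))

lemma twoPt_eq_GM {δ s r : ℝ} (hδ : 0 < δ) (hs : 0 < s) (hs1 : s < 1) (hr : 0 < r) (hr1 : r < 1)
    (hne : s ≠ r) : twoPt δ s r = GM δ s r := by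
  rcases lt_or_gt_of_ne hne with hlt | hlt
  · rw [twoPt_eq hδ hs hlt hr1, GG, GM, if_pos hlt, Set.projIcc_of_mem _ (zz_mem hs hlt.le hr1)]
  · have hu : ∀ x, uu (1 - x) = uu x := fun x => by unfold uu; congr 1; ring
    have hz : zz (1 - s) (1 - r) = zz r s := by unfold zz; congr 1 <;> ring
    rw [twoPt_symm hne, twoPt_eq hδ (by linarith) (by linarith) (by linarith), GG, GM,
      if_neg (by linarith), Set.projIcc_of_mem _ (zz_mem hr hlt.le hs1), hu, hu, hz]

lemma GM_meas {δ : ℝ} (hδ : 0 < δ) : Measurable (fun p : ℝ × ℝ => GM δ p.1 p.2) := by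
  have hF : Continuous (fun x : ℝ => FF (δ / 2) (Set.projIcc (0:ℝ) 1 zero_le_one x)) :=
    (FF_cont (by positivity)).comp_continuous (continuous_subtype_val.comp continuous_projIcc)
      (fun x => Subtype.coe_prop _)
  have hw : Measurable (fun p : ℝ × ℝ => if p.1 < p.2 then zz p.1 p.2 else zz p.2 p.1) := by
    refine Measurable.ite (measurableSet_lt measurable_fst measurable_snd) ?_ ?_ <;>
    · unfold zz; fun_prop
  have hu := uu_cont.measurable
  exact (measurable_const.mul (hu.comp measurable_fst)).mul
    ((hu.comp measurable_snd).mul (hF.measurable.comp hw))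

lemma uu_bound (r : ℝ) : |uu r| ≤ 1 := by
  unfold uu
  rw [abs_of_nonneg (Real.sqrt_nonneg _)]
  refine Real.sqrt_le_one.2 ?_
  nlinarith [sq_nonneg (r - 1/2)]

lemma GM_bound {δ : ℝ} (hδ : 0 < δ) : ∃ M, ∀ s r, |GM δ s r| ≤ M := by
  obtain ⟨M, hM⟩ := isCompact_Icc.exists_bound_of_continuousOn (FF_cont (by positivity : 0 < δ / 2))
  refine ⟨|Kcoef δ| * 1 * (1 * M), fun s r => ?_⟩
  unfold GM
  rw [abs_mul, abs_mul, abs_mul]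
  have h1 := uu_bound s
  have h2 := uu_bound r
  have h3 := hM _ (Set.projIcc (0:ℝ) 1 zero_le_one (if s < r then zz s r else zz r s)).2
  rw [Real.norm_eq_abs] at h3
  gcongr

lemma A_int {δ : ℝ} (hδ : 0 < δ) {φ h : ℝ → ℝ} (hφ : ContinuousOn φ (Set.Icc 0 1))
    (hd2 : Continuous (deriv (deriv h))) :
    IntervalIntegrable (fun s => φ s * ∫ r in (0:ℝ)..1, deriv (deriv h) r * twoPt δ s r) volume 0 1 := by
  have hm : StronglyMeasurable (fun p : ℝ × ℝ => deriv (deriv h) p.2 * GM δ p.1 p.2) :=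
    ((hd2.measurable.comp measurable_snd).mul (GM_meas hδ)).stronglyMeasurable
  have hA : StronglyMeasurable (fun s : ℝ => ∫ r in Set.Ioc (0:ℝ) 1, deriv (deriv h) r * GM δ s r) :=
    StronglyMeasurable.integral_prod_right (ν := volume.restrict (Set.Ioc (0:ℝ) 1)) hm
  obtain ⟨M, hM⟩ := GM_bound hδ
  obtain ⟨N, hN⟩ := (isCompact_Icc (a := (0:ℝ)) (b := 1)).exists_bound_of_continuousOn hd2.continuousOn
  have hb : ∀ s, ‖∫ r in (0:ℝ)..1, deriv (deriv h) r * GM δ s r‖ ≤ N * M := by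
    intro s
    have := intervalIntegral.norm_integral_le_of_norm_le_const (a := (0:ℝ)) (b := 1) (C := N * M)
      (f := fun r => deriv (deriv h) r * GM δ s r) (fun r hr => by
        rw [Set.uIoc_of_le zero_le_one] at hr
        have h1 := hN r ⟨hr.1.le, hr.2⟩
        rw [norm_mul]
        have h2 : ‖GM δ s r‖ ≤ M := hM s r
        have := (norm_nonneg _).trans h1
        gcongr)
    simpa using this
  have base : IntegrableOn (fun s => φ s * ∫ r in (0:ℝ)..1, deriv (deriv h) r * GM δ s r)
      (Set.Ioc 0 1) := by
    have hφi : IntegrableOn φ (Set.Ioc 0 1) :=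
      (hφ.integrableOn_Icc).mono_set Set.Ioc_subset_Icc_self
    refine Integrable.mul_bdd (c := N * M) hφi ?_ (ae_of_all _ hb)
    refine AEStronglyMeasurable.congr hA.aestronglyMeasurable (ae_of_all _ fun s => ?_)
    exact (intervalIntegral.integral_of_le zero_le_one).symm
  refine ii_int_congr zero_le_one (fun s hs => ?_)
    ((intervalIntegrable_iff_integrableOn_Ioc_of_le zero_le_one).2 base)
  congr 1
  rw [intervalIntegral.integral_of_le zero_le_one, intervalIntegral.integral_of_le zero_le_one,
      integral_Ioc_eq_integral_Ioo, integral_Ioc_eq_integral_Ioo]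
  refine setIntegral_congr_ae measurableSet_Ioo ?_
  have : ∀ᵐ r : ℝ, r ≠ s := by simp [ae_iff]
  filter_upwards [this] with r hr hr2
  rw [twoPt_eq_GM hδ hs.1 hs.2 hr2.1 hr2.2 hr.symm]

theorem bessel_ibpf_linear (δ : ℝ) (hδ : 0 < δ) (hδ2 : δ ≠ 2)
    (φ h : ℝ → ℝ) (hφ : ContinuousOn φ (Set.Icc 0 1))
    (hh : ContDiff ℝ 2 h) (hsupp : tsupport h ⊆ Set.Ioo 0 1) :
    ∫ r in (0:ℝ)..1, φ r * h r =
      -(∫ s in (0:ℝ)..1, ∫ r in (0:ℝ)..1, φ s * deriv (deriv h) r * twoPt δ s r)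
      + (1 / (4 * (δ - 2))) *
        ∫ s in (0:ℝ)..1, ∫ r in (0:ℝ)..1, φ s * h r *
          ∫ b in Set.Ioi (0:ℝ), b ^ (δ - 1) * deriv^[3] (SigmaRS δ r s) b := by
  have hne : δ - 2 ≠ 0 := sub_ne_zero.2 hδ2
  have hd1 : ContDiff ℝ 1 (deriv h) := ((contDiff_succ_iff_deriv (n := 1)).1 hh).2.2
  have hd2 : Continuous (deriv (deriv h)) := hd1.continuous_deriv (by norm_num)
  have I1 := A_int hδ hφ hd2
  have I2 : IntervalIntegrable (fun s => φ s * h s) volume 0 1 := by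
    refine ContinuousOn.intervalIntegrable ?_
    rw [Set.uIcc_of_le zero_le_one]
    exact hφ.mul hh.continuous.continuousOn
  have e1 : ∀ s, ∫ r in (0:ℝ)..1, φ s * deriv (deriv h) r * twoPt δ s r =
      φ s * ∫ r in (0:ℝ)..1, deriv (deriv h) r * twoPt δ s r := by
    intro s
    rw [← intervalIntegral.integral_const_mul]; congr 1; funext r; ring
  have e2 : ∀ s ∈ Set.Ioo (0:ℝ) 1, (∫ r in (0:ℝ)..1, φ s * h r *
          ∫ b in Set.Ioi (0:ℝ), b ^ (δ - 1) * deriv^[3] (SigmaRS δ r s) b) =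
      4 * (δ - 2) * (φ s * h s + φ s * ∫ r in (0:ℝ)..1, deriv (deriv h) r * twoPt δ s r) := by
    intro s hs
    have p := pointwise hδ hδ2 hs.1 hs.2 hh hsupp
    calc _ = φ s * ∫ r in (0:ℝ)..1, h r * JJ δ s r := by
          rw [← intervalIntegral.integral_const_mul]; congr 1; funext r; rw [JJ]; ring
      _ = _ := by rw [p]; ring
  rw [ii_congr zero_le_one e2, intervalIntegral.integral_const_mul,
    intervalIntegral.integral_add I2 I1]
  simp only [e1]
  field_simp
  ring
end

section
/- Let α, β, γ be complex numbers such that γ is not a nonpositive integer and γ−α−β is a negative real number that is not an integer. Then, as z→1 with z ∈ (0,1), one has ₂F₁(α,β,γ,z) ∼ (Γ(γ)Γ(α+β−γ))/(Γ(α)Γ(β)) · (1−z)^{γ−α−β}; equivalently, lim_{z→1⁻} (1−z)^{α+β−γ} ₂F₁(α,β,γ,z) = Γ(γ)Γ(α+β−γ)/(Γ(α)Γ(β)). -/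
open Filter

/-- Ascending Pochhammer symbol `(a)_k = a(a+1)⋯(a+k-1)` for a complex number `a`. -/
noncomputable def cpoch (a : ℂ) (k : ℕ) : ℂ := ∏ i ∈ Finset.range k, (a + i)

/-- Gauss hypergeometric function `₂F₁(a,b,c,z) = ∑ (a)_k (b)_k / (k! (c)_k) z^k`
with complex parameters. -/
noncomputable def chyp2F1 (a b c z : ℂ) : ℂ :=
  ∑' k : ℕ, (cpoch a k * cpoch b k) / ((Nat.factorial k : ℂ) * cpoch c k) * z ^ k

open Topology

lemma cpoch_eq_GammaSeq (s : ℂ) {n : ℕ} (hn : n ≠ 0) :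
    cpoch s (n + 1) = (n : ℂ) ^ s * (n.factorial : ℂ) * (Complex.GammaSeq s n)⁻¹ := by
  have h1 : (n : ℂ) ^ s ≠ 0 := by
    rw [Complex.cpow_ne_zero_iff]; left; exact_mod_cast hn
  have h2 : (n.factorial : ℂ) ≠ 0 := by exact_mod_cast n.factorial_ne_zero
  rw [Complex.GammaSeq, inv_div, cpoch]
  field_simp

lemma tendsto_GammaSeq_inv (s : ℂ) :
    Tendsto (fun n => (Complex.GammaSeq s n)⁻¹) atTop (𝓝 (Complex.Gamma s)⁻¹) := by
  by_cases h : Complex.Gamma s = 0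
  · obtain ⟨m, rfl⟩ := (Complex.Gamma_eq_zero_iff s).1 h
    rw [h, inv_zero]
    refine tendsto_const_nhds.congr' ?_
    filter_upwards [eventually_ge_atTop m] with n hn
    have : ∏ j ∈ Finset.range (n + 1), (-(m : ℂ) + j) = 0 :=
      Finset.prod_eq_zero (i := m) (by simp; omega) (by simp)
    simp [Complex.GammaSeq, this]
  · exact (Complex.GammaSeq_tendsto_Gamma s).inv₀ h

lemma tendsto_ratio (α β γ s : ℂ) (hs : s = α + β - γ) :
    Tendsto (fun k => cpoch α k * cpoch β k / (cpoch γ k * cpoch s k)) atTop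
      (𝓝 (Complex.Gamma γ * Complex.Gamma s / (Complex.Gamma α * Complex.Gamma β))) := by
  rw [← tendsto_add_atTop_iff_nat 1]
  have h := ((Complex.GammaSeq_tendsto_Gamma γ).mul (Complex.GammaSeq_tendsto_Gamma s)).mul
    ((tendsto_GammaSeq_inv α).mul (tendsto_GammaSeq_inv β))
  rw [← mul_inv, ← div_eq_mul_inv] at h
  refine h.congr' ?_
  filter_upwards [eventually_ne_atTop 0] with n hn
  rw [cpoch_eq_GammaSeq α hn, cpoch_eq_GammaSeq β hn, cpoch_eq_GammaSeq γ hn,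
    cpoch_eq_GammaSeq s hn]
  have hn' : (n : ℂ) ≠ 0 := by exact_mod_cast hn
  have h1 : ∀ s : ℂ, (n : ℂ) ^ s ≠ 0 := fun s => by
    rw [Complex.cpow_ne_zero_iff]; left; exact hn'
  have h2 : (n.factorial : ℂ) ≠ 0 := by exact_mod_cast n.factorial_ne_zero
  have h3 : (n : ℂ) ^ α * (n : ℂ) ^ β = (n : ℂ) ^ γ * (n : ℂ) ^ s := by
    rw [← Complex.cpow_add _ _ hn', ← Complex.cpow_add _ _ hn', hs]; congr 1; ring
  have h4 : ∀ A B C D : ℂ, (n : ℂ) ^ α * n.factorial * A * ((n : ℂ) ^ β * n.factorial * B) /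
      ((n : ℂ) ^ γ * n.factorial * C⁻¹ * ((n : ℂ) ^ s * n.factorial * D⁻¹)) = C * D * (A * B) := by
    intro A B C D
    have : (n : ℂ) ^ α * n.factorial * A * ((n : ℂ) ^ β * n.factorial * B) /
      ((n : ℂ) ^ γ * n.factorial * C⁻¹ * ((n : ℂ) ^ s * n.factorial * D⁻¹)) =
      (((n : ℂ) ^ α * (n : ℂ) ^ β) * (n.factorial * n.factorial)) /
        (((n : ℂ) ^ γ * (n : ℂ) ^ s) * (n.factorial * n.factorial)) * (A * B) * (C⁻¹⁻¹ * D⁻¹⁻¹) := by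
      simp only [div_eq_mul_inv, mul_inv]; ring
    rw [this, h3, div_self (mul_ne_zero (mul_ne_zero (h1 _) (h1 _)) (mul_ne_zero h2 h2)),
      inv_inv, inv_inv]
    ring
  exact (h4 _ _ _ _).symm

lemma hasSum_binom (s x : ℝ) (hx0 : 0 < x) (hx1 : x < 1) :
    HasSum (fun k : ℕ => (∏ i ∈ Finset.range k, (s + i)) / (k.factorial : ℝ) * x ^ k)
      (1 / (1 - x) ^ s) := by
  have h := (Real.one_div_one_sub_rpow_hasFPowerSeriesOnBall_zero s).hasSum (y := x) (by
    rw [← ENNReal.ofReal_one, Metric.eball_ofReal]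
    simpa [abs_of_pos hx0] using hx1)
  simp only [zero_add] at h
  suffices hk : ∀ k : ℕ, (∏ i ∈ Finset.range k, (s + i)) / (k.factorial : ℝ) * x ^ k =
      (FormalMultilinearSeries.ofScalars ℝ (fun n : ℕ => Ring.choose (s + n - 1) n) k)
        fun _ => x by
    simp only [hk]
    exact h
  intro k
  have h2 : (k.factorial : ℝ) ≠ 0 := by exact_mod_cast k.factorial_ne_zero
  have h3 : (k.factorial : ℝ) * Ring.multichoose s k = ∏ i ∈ Finset.range k, (s + i) := by
    rw [← nsmul_eq_mul, Ring.factorial_nsmul_multichoose_eq_ascPochhammer,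
      Polynomial.ascPochhammer_smeval_eq_eval]
    clear h h2
    induction k with
    | zero => simp
    | succ k ih => rw [ascPochhammer_succ_eval, ih, Finset.prod_range_succ]
  rw [← h3]
  simp only [FormalMultilinearSeries.ofScalars_apply_eq, ← Ring.multichoose_eq, smul_eq_mul]
  rw [mul_div_cancel_left₀ _ h2]

lemma abelian (s : ℝ) (hs : 0 < s) (b : ℕ → ℝ) (hb : ∀ k, 0 ≤ b k) (r : ℕ → ℂ) (L : ℂ)
    (hr : Tendsto r atTop (𝓝 L))
    (hsum : ∀ x : ℝ, 0 < x → x < 1 → HasSum (fun k => b k * x ^ k) (1 / (1 - x) ^ s)) :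
    Tendsto (fun x : ℝ => (((1 - x) ^ s : ℝ) : ℂ) * ∑' k, (b k * r k) * (x : ℂ) ^ k)
      (𝓝[Set.Ioo (0 : ℝ) 1] 1) (𝓝 L) := by
  rw [Metric.tendsto_nhds]
  intro ε hε
  obtain ⟨N, hN⟩ := (Metric.tendsto_atTop.1 hr) (ε / 2) (by positivity)
  set C : ℝ := ∑ k ∈ Finset.range N, b k * ‖r k - L‖ with hC
  have hlim : Tendsto (fun x : ℝ => (1 - x) ^ s * C) (𝓝[Set.Ioo (0 : ℝ) 1] 1) (𝓝 0) := by
    have : ContinuousAt (fun x : ℝ => (1 - x) ^ s * C) 1 := by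
      refine ContinuousAt.mul (ContinuousAt.rpow_const (by fun_prop) (Or.inr hs.le))
        continuousAt_const
    have h := this.tendsto
    simp only [sub_self, Real.zero_rpow hs.ne', zero_mul] at h
    exact h.mono_left nhdsWithin_le_nhds
  filter_upwards [hlim.eventually (gt_mem_nhds (show (0 : ℝ) < ε / 2 by positivity)),
    self_mem_nhdsWithin] with x hx ⟨hx0, hx1⟩
  have hg := hsum x hx0 hx1
  have hp : 0 < (1 - x) ^ s := Real.rpow_pos_of_pos (by linarith) s
  have hfin : HasSum (fun k => if k ∈ Finset.range N then b k * ‖r k - L‖ else 0) C := by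
    have := hasSum_sum_of_ne_finset_zero (s := Finset.range N)
      (f := fun k => if k ∈ Finset.range N then b k * ‖r k - L‖ else 0) (L := .unconditional ℕ)
      (fun k hk => if_neg hk)
    convert this using 1
    exact Finset.sum_congr rfl fun k hk => (if_pos hk).symm
  have hbd := hfin.add (hg.mul_left (ε / 2))
  have hle : ∀ k, ‖((b k : ℂ) * (r k - L)) * (x : ℂ) ^ k‖ ≤
      (if k ∈ Finset.range N then b k * ‖r k - L‖ else 0) + ε / 2 * (b k * x ^ k) := by
    intro k
    have hxk : 0 ≤ x ^ k := by positivity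
    have hxk1 : x ^ k ≤ 1 := pow_le_one₀ hx0.le hx1.le
    rw [norm_mul, norm_mul, norm_pow, Complex.norm_real, Complex.norm_real, Real.norm_of_nonneg (hb k),
      Real.norm_of_nonneg hx0.le]
    have hbx := mul_nonneg (hb k) hxk
    split_ifs with hk
    · have := mul_nonneg (hb k) (norm_nonneg (r k - L))
      nlinarith
    · have := hN k (by simpa using hk)
      rw [dist_eq_norm] at this
      nlinarith
  have hsm : Summable (fun k => ((b k : ℂ) * (r k - L)) * (x : ℂ) ^ k) :=
    Summable.of_norm_bounded hbd.summable hle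
  have hnorm := tsum_of_norm_bounded hbd hle
  have hgC : HasSum (fun k => (b k : ℂ) * (x : ℂ) ^ k) ((1 / (1 - x) ^ s : ℝ) : ℂ) := by
    have := Complex.hasSum_ofReal.2 hg
    simpa using this
  have htot := (hgC.mul_left L).add hsm.hasSum
  have heq : ∑' k, (b k * r k) * (x : ℂ) ^ k = L * ((1 / (1 - x) ^ s : ℝ) : ℂ) +
      ∑' k, ((b k : ℂ) * (r k - L)) * (x : ℂ) ^ k := by
    rw [← htot.tsum_eq]
    congr 1; ext k; ring
  rw [heq, dist_eq_norm]
  set T := ∑' k, ((b k : ℂ) * (r k - L)) * (x : ℂ) ^ k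
  have hpC : (((1 - x) ^ s : ℝ) : ℂ) ≠ 0 := by exact_mod_cast hp.ne'
  have : (((1 - x) ^ s : ℝ) : ℂ) * (L * ((1 / (1 - x) ^ s : ℝ) : ℂ) + T) - L =
      (((1 - x) ^ s : ℝ) : ℂ) * T := by
    rw [Complex.ofReal_div, Complex.ofReal_one]
    field_simp
    ring
  rw [this, norm_mul, Complex.norm_real, Real.norm_of_nonneg hp.le]
  calc (1 - x) ^ s * ‖T‖ ≤ (1 - x) ^ s * (C + ε / 2 * (1 / (1 - x) ^ s)) := by gcongr
    _ = (1 - x) ^ s * C + ε / 2 := by field_simp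
    _ < ε := by linarith

theorem hyp2F1_asymptotics_at_one (α β γ : ℂ) (hγ : ∀ n : ℕ, γ ≠ -(n : ℂ))
    (him : (γ - α - β).im = 0) (hneg : (γ - α - β).re < 0)
    (hnint : ∀ n : ℤ, γ - α - β ≠ (n : ℂ)) :
    Tendsto (fun z : ℝ => (1 - (z : ℂ)) ^ (α + β - γ) * chyp2F1 α β γ z)
      (nhdsWithin 1 (Set.Ioo (0 : ℝ) 1))
      (nhds (Complex.Gamma γ * Complex.Gamma (α + β - γ) /
        (Complex.Gamma α * Complex.Gamma β))) := by
  obtain ⟨s, hs⟩ : ∃ s : ℝ, (s : ℂ) = α + β - γ := by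
    refine ⟨(α + β - γ).re, Complex.ext (by simp) ?_⟩
    simp at him ⊢
    linarith
  have hs0 : 0 < s := by
    have := congrArg Complex.re hs
    simp at this hneg
    linarith
  have hpos : ∀ k, 0 < ∏ i ∈ Finset.range k, (s + i) := fun k =>
    Finset.prod_pos fun i _ => by positivity
  have hcp : ∀ k, cpoch s k = ((∏ i ∈ Finset.range k, (s + i) : ℝ) : ℂ) := fun k => by
    simp [cpoch]
  have main := abelian s hs0 (fun k => (∏ i ∈ Finset.range k, (s + i)) / (k.factorial : ℝ))
    (fun k => div_nonneg (hpos k).le (by positivity))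
    _ _ (tendsto_ratio α β γ s hs) (fun x h0 h1 => hasSum_binom s x h0 h1)
  rw [← hs]
  refine main.congr' ?_
  filter_upwards [self_mem_nhdsWithin] with x ⟨hx0, hx1⟩
  rw [Complex.ofReal_cpow (by linarith), chyp2F1]
  push_cast
  congr 2
  ext k
  have h1 : cpoch s k ≠ 0 := by rw [hcp]; exact_mod_cast (hpos k).ne'
  have h2 : (k.factorial : ℂ) ≠ 0 := by exact_mod_cast k.factorial_ne_zero
  have h3 : cpoch γ k ≠ 0 := Finset.prod_ne_zero_iff.2 fun i _ h =>
    hγ i (eq_neg_of_add_eq_zero_left h)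
  have h5 : ∏ i ∈ Finset.range k, ((s : ℂ) + i) = cpoch s k := rfl
  rw [h5]
  field_simp
end

section
/- Let δ>0, let 0<s<r<1 and let b>0. Then b^{1−δ} · (1−r)^{−δ/2} exp(−b²/(2(1−r))) · ∫₀^∞ a · p^δ_s(0,a) · p^δ_{r−s}(a,b) da = Σ^δ_{r,s}(b), i.e. the integral expression on the left equals (2^{δ/2−1}(r(1−r))^{δ/2})^{−1} exp(−D(s,r)b²/2) ∑_{k=0}^∞ C_k f_k(s,r) b^{2k} with D(s,r) = (1−s)/((r−s)(1−r)), C_k = Γ(k+(δ+1)/2)/(Γ(δ/2)Γ(k+δ/2)k!) and f_k(s,r) = (2(r−s))^{1/2−k}(s/r)^{k+1/2}. -/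
open MeasureTheory Real Filter

/-- Transition density of the δ-dimensional Bessel process started at 0:
`p^δ_t(0,a) = a^{δ-1}/(2^{δ/2-1} t^{δ/2} Γ(δ/2)) exp(-a²/(2t))`. -/
noncomputable def pFrom0 (δ t a : ℝ) : ℝ :=
  a ^ (δ - 1) / ((2 : ℝ) ^ (δ / 2 - 1) * t ^ (δ / 2) * Real.Gamma (δ / 2)) *
    Real.exp (-a ^ 2 / (2 * t))

/-- Transition density of the δ-dimensional Bessel process:
`p^δ_t(a,b) = (b/t)(b/a)^{δ/2-1} exp(-(a²+b²)/(2t)) ∑ (ab/(2t))^{2k+δ/2-1}/(k! Γ(k+δ/2))`. -/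
noncomputable def pTrans (δ t a b : ℝ) : ℝ :=
  (b / t) * (b / a) ^ (δ / 2 - 1) * Real.exp (-(a ^ 2 + b ^ 2) / (2 * t)) *
    ∑' k : ℕ, (a * b / (2 * t)) ^ (2 * (k : ℝ) + δ / 2 - 1) /
      ((Nat.factorial k : ℝ) * Real.Gamma ((k : ℝ) + δ / 2))

/-- Constant in front of the `k`-th term of the integrand. -/
noncomputable def auxConst (δ s t b : ℝ) (k : ℕ) : ℝ :=
  ((2 : ℝ) ^ (δ / 2 - 1) * s ^ (δ / 2) * Real.Gamma (δ / 2))⁻¹ * ((b / t) * b ^ (δ / 2 - 1) *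
    (b / (2 * t)) ^ (2 * (k : ℝ) + δ / 2 - 1) * Real.exp (-b ^ 2 / (2 * t))) /
      ((Nat.factorial k : ℝ) * Real.Gamma ((k : ℝ) + δ / 2))

lemma aux_summable (δ : ℝ) (hδ : 0 < δ) (x : ℝ) (hx : 0 < x) :
    Summable (fun k : ℕ => Ccoef δ k * x ^ k) := by
  obtain ⟨N, hN⟩ := exists_nat_ge (4 * x)
  refine summable_of_ratio_norm_eventually_le (r := 1 / 2) (by norm_num) ?_
  filter_upwards [eventually_ge_atTop (N + 1)] with k hk
  have hk' : (N : ℝ) + 1 ≤ k := by exact_mod_cast hk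
  have hN0 : (0 : ℝ) ≤ N := Nat.cast_nonneg N
  have g1 : 0 < Real.Gamma ((k : ℝ) + (δ + 1) / 2) := Real.Gamma_pos_of_pos (by positivity)
  have g2 : 0 < Real.Gamma ((k : ℝ) + δ / 2) := Real.Gamma_pos_of_pos (by positivity)
  have g3 : 0 < Real.Gamma (δ / 2) := Real.Gamma_pos_of_pos (by positivity)
  have e1 : Real.Gamma (((k + 1 : ℕ) : ℝ) + (δ + 1) / 2)
      = ((k : ℝ) + (δ + 1) / 2) * Real.Gamma ((k : ℝ) + (δ + 1) / 2) := by
    rw [← Real.Gamma_add_one (by positivity)]; congr 1; push_cast; ring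
  have e2 : Real.Gamma (((k + 1 : ℕ) : ℝ) + δ / 2)
      = ((k : ℝ) + δ / 2) * Real.Gamma ((k : ℝ) + δ / 2) := by
    rw [← Real.Gamma_add_one (by positivity)]; congr 1; push_cast; ring
  have hpos : 0 < Ccoef δ k * x ^ k := by unfold Ccoef; positivity
  have key : Ccoef δ (k + 1) * x ^ (k + 1) =
      (x * ((k : ℝ) + (δ + 1) / 2) / (((k : ℝ) + δ / 2) * (k + 1))) * (Ccoef δ k * x ^ k) := by
    unfold Ccoef
    rw [e1, e2, Nat.factorial_succ, pow_succ]
    push_cast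
    have : (k : ℝ) + δ / 2 ≠ 0 := by positivity
    field_simp
  rw [key, norm_mul]
  refine mul_le_mul_of_nonneg_right ?_ (norm_nonneg _)
  rw [Real.norm_of_nonneg (by positivity), div_le_iff₀ (by positivity)]
  nlinarith [mul_pos hx hδ, mul_nonneg (sub_nonneg.2 hk') (by positivity : (0 : ℝ) ≤ k + δ / 2),
    mul_nonneg (sub_nonneg.2 hN) (by positivity : (0 : ℝ) ≤ k + δ / 2), mul_nonneg hx.le (by linarith : (0:ℝ) ≤ k - 1)]

lemma aux_pointwise (δ s t b a : ℝ) (hδ : 0 < δ) (hs : 0 < s) (ht : 0 < t) (hb : 0 < b)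
    (ha : 0 < a) :
    a * pFrom0 δ s a * pTrans δ t a b = ∑' k : ℕ, auxConst δ s t b k *
      (a ^ (2 * (k : ℝ) + δ) * Real.exp (-((s + t) / (2 * s * t)) * a ^ (2 : ℝ))) := by
  unfold pTrans
  rw [← mul_assoc, ← tsum_mul_left]
  refine tsum_congr fun k => ?_
  unfold pFrom0 auxConst
  have g2 : 0 < Real.Gamma ((k : ℝ) + δ / 2) := Real.Gamma_pos_of_pos (by positivity)
  have g3 : 0 < Real.Gamma (δ / 2) := Real.Gamma_pos_of_pos (by positivity)
  have h1 : Real.exp (-((s + t) / (2 * s * t)) * a ^ (2 : ℝ)) * Real.exp (-b ^ 2 / (2 * t))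
      = Real.exp (-a ^ 2 / (2 * s)) * Real.exp (-(a ^ 2 + b ^ 2) / (2 * t)) := by
    rw [← Real.exp_add, ← Real.exp_add, Real.rpow_two]
    congr 1
    field_simp
    ring
  have h2 : a * a ^ (δ - 1) * (b / a) ^ (δ / 2 - 1) * (a * b / (2 * t)) ^ (2 * (k : ℝ) + δ / 2 - 1)
      = b ^ (δ / 2 - 1) * (b / (2 * t)) ^ (2 * (k : ℝ) + δ / 2 - 1) * a ^ (2 * (k : ℝ) + δ) := by
    nth_rewrite 1 [← Real.exp_log ha]
    rw [Real.rpow_def_of_pos ha, Real.rpow_def_of_pos (by positivity : 0 < b / a),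
      Real.rpow_def_of_pos (by positivity : 0 < a * b / (2 * t)),
      Real.rpow_def_of_pos hb, Real.rpow_def_of_pos (by positivity : 0 < b / (2 * t)),
      Real.rpow_def_of_pos ha, Real.log_div hb.ne' ha.ne',
      Real.log_div (by positivity) (by positivity), Real.log_div hb.ne' (by positivity),
      Real.log_mul ha.ne' hb.ne']
    simp only [← Real.exp_add]
    congr 1
    ring
  calc _ = ((2 : ℝ) ^ (δ / 2 - 1) * s ^ (δ / 2) * Real.Gamma (δ / 2))⁻¹ * (b / t) /
        ((Nat.factorial k : ℝ) * Real.Gamma ((k : ℝ) + δ / 2)) *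
        (Real.exp (-a ^ 2 / (2 * s)) * Real.exp (-(a ^ 2 + b ^ 2) / (2 * t)) *
        (a * a ^ (δ - 1) * (b / a) ^ (δ / 2 - 1) *
          (a * b / (2 * t)) ^ (2 * (k : ℝ) + δ / 2 - 1))) := by ring
    _ = _ := by rw [h2, ← h1]; ring

lemma aux_term (δ : ℝ) (hδ : 0 < δ) (s r : ℝ)
    (hs : 0 < s) (hsr : s < r) (hr : r < 1) (b : ℝ) (hb : 0 < b) (k : ℕ) :
    b ^ (1 - δ) * (1 - r) ^ (-(δ / 2)) * Real.exp (-b ^ 2 / (2 * (1 - r))) *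
      (auxConst δ s (r - s) b k * ∫ a in Set.Ioi (0 : ℝ),
      (a ^ (2 * (k : ℝ) + δ) * Real.exp (-((s + (r - s)) / (2 * s * (r - s))) * a ^ (2 : ℝ))))
    = ((2 : ℝ) ^ (δ / 2 - 1) * (r * (1 - r)) ^ (δ / 2))⁻¹ *
    Real.exp (-(Dcoef s r) * b ^ 2 / 2) * (Ccoef δ k * fcoef s r k * b ^ (2 * k)) := by
  have ht : 0 < r - s := sub_pos.2 hsr
  have hr0 : 0 < r := hs.trans hsr
  have hq : 0 < 1 - r := sub_pos.2 hr
  have hβ : (s + (r - s)) / (2 * s * (r - s)) = r / (2 * s * (r - s)) := by ring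
  rw [hβ, integral_rpow_mul_exp_neg_mul_rpow (by norm_num) (by linarith [Nat.cast_nonneg (α := ℝ) k])
    (by positivity)]
  unfold auxConst Dcoef Ccoef fcoef
  rw [if_pos hsr, if_pos hsr]
  have hexp : Real.exp (-b ^ 2 / (2 * (1 - r))) * Real.exp (-b ^ 2 / (2 * (r - s)))
      = Real.exp (-((1 - s) / ((r - s) * (1 - r))) * b ^ 2 / 2) := by
    rw [← Real.exp_add]
    congr 1
    field_simp
    ring
  have hG : (2 * (k : ℝ) + δ + 1) / 2 = (k : ℝ) + (δ + 1) / 2 := by ring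
  rw [← hexp, hG]
  have hpow : b ^ (1 - δ) * (1 - r) ^ (-(δ / 2)) * ((2 : ℝ) ^ (δ / 2 - 1) * s ^ (δ / 2))⁻¹ *
      ((b / (r - s)) * b ^ (δ / 2 - 1) * (b / (2 * (r - s))) ^ (2 * (k : ℝ) + δ / 2 - 1)) *
      ((r / (2 * s * (r - s))) ^ (-(2 * (k : ℝ) + δ + 1) / 2) * (1 / 2))
      = ((2 : ℝ) ^ (δ / 2 - 1) * (r * (1 - r)) ^ (δ / 2))⁻¹ *
      ((2 * (r - s)) ^ ((1 : ℝ) / 2 - (k : ℝ)) * (s / r) ^ ((k : ℝ) + 1 / 2) * b ^ (2 * k)) := by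
    generalize r - s = t at ht
    generalize 1 - r = q at hq
    obtain ⟨B, rfl⟩ : ∃ B, b = Real.exp B := ⟨_, (Real.exp_log hb).symm⟩
    obtain ⟨T, rfl⟩ : ∃ B, t = Real.exp B := ⟨_, (Real.exp_log ht).symm⟩
    obtain ⟨Q, rfl⟩ : ∃ B, q = Real.exp B := ⟨_, (Real.exp_log hq).symm⟩
    obtain ⟨S, rfl⟩ : ∃ B, s = Real.exp B := ⟨_, (Real.exp_log hs).symm⟩
    obtain ⟨R, rfl⟩ : ∃ B, r = Real.exp B := ⟨_, (Real.exp_log hr0).symm⟩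
    obtain ⟨L, hL⟩ : ∃ B, (2 : ℝ) = Real.exp B := ⟨_, (Real.exp_log two_pos).symm⟩
    have h2 : ((2 : ℝ) ^ (δ / 2 - 1)) = Real.exp (L * (δ / 2 - 1)) := by
      rw [hL, ← Real.exp_mul, ← hL]
    have h3 : (1 / 2 : ℝ) = Real.exp (-L) := by rw [Real.exp_neg, ← hL]; norm_num
    have h4 : (2 * Real.exp T) = Real.exp (L + T) := by rw [Real.exp_add, ← hL]
    have h5 : (2 * Real.exp S * Real.exp T) = Real.exp (L + S + T) := by
      rw [Real.exp_add, Real.exp_add, ← hL]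
    have h6 : Real.exp B ^ (2 * k) = Real.exp (B * (2 * k)) := by
      rw [← Real.rpow_natCast, ← Real.exp_mul]; push_cast; rfl
    have h7 : ∀ z : ℝ, z * (1 / 2 : ℝ) = z * Real.exp (-L) := fun z => by rw [h3]
    rw [h7, h2, h4, h5, h6]
    simp only [← Real.exp_sub, ← Real.exp_add, ← Real.exp_mul, ← Real.exp_neg]
    congr 1
    ring
  calc _ = (b ^ (1 - δ) * (1 - r) ^ (-(δ / 2)) * ((2 : ℝ) ^ (δ / 2 - 1) * s ^ (δ / 2))⁻¹ *
      ((b / (r - s)) * b ^ (δ / 2 - 1) * (b / (2 * (r - s))) ^ (2 * (k : ℝ) + δ / 2 - 1)) *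
      ((r / (2 * s * (r - s))) ^ (-(2 * (k : ℝ) + δ + 1) / 2) * (1 / 2))) *
      (Real.exp (-b ^ 2 / (2 * (1 - r))) * Real.exp (-b ^ 2 / (2 * (r - s)))) *
      (Real.Gamma ((k : ℝ) + (δ + 1) / 2) /
    (Real.Gamma (δ / 2) * Real.Gamma ((k : ℝ) + δ / 2) * (Nat.factorial k : ℝ))) := by
        simp only [div_eq_mul_inv, mul_inv]; ring
    _ = _ := by rw [hpow]; ring

lemma aux_fcoef (s r b : ℝ) (hs : 0 < s) (hsr : s < r) (k : ℕ) :
    fcoef s r k * b ^ (2 * k) = ((2 * (r - s)) ^ ((1 : ℝ) / 2) * (s / r) ^ ((1 : ℝ) / 2)) *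
      ((2 * (r - s))⁻¹ * (s / r) * b ^ 2) ^ k := by
  have ht : 0 < r - s := sub_pos.2 hsr
  have hr0 : 0 < r := hs.trans hsr
  unfold fcoef
  rw [if_pos hsr, Real.rpow_sub (by positivity), Real.rpow_add (by positivity),
    Real.rpow_natCast, Real.rpow_natCast, mul_pow (_ * _) (b ^ 2), mul_pow _ (s / r), inv_pow, pow_mul]
  ring

theorem sigma_eq_integral_of_densities (δ : ℝ) (hδ : 0 < δ) (s r : ℝ)
    (hs : 0 < s) (hsr : s < r) (hr : r < 1) (b : ℝ) (hb : 0 < b) :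
    b ^ (1 - δ) * (1 - r) ^ (-(δ / 2)) * Real.exp (-b ^ 2 / (2 * (1 - r))) *
      (∫ a in Set.Ioi (0 : ℝ), a * pFrom0 δ s a * pTrans δ (r - s) a b)
    = SigmaRS δ r s b := by
  have ht : 0 < r - s := sub_pos.2 hsr
  have hr0 : 0 < r := hs.trans hsr
  have hq : 0 < 1 - r := sub_pos.2 hr
  have hβ : 0 < (s + (r - s)) / (2 * s * (r - s)) := by positivity
  set P : ℝ := b ^ (1 - δ) * (1 - r) ^ (-(δ / 2)) * Real.exp (-b ^ 2 / (2 * (1 - r))) with hP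
  have hP0 : 0 < P := by positivity
  set F : ℕ → ℝ → ℝ := fun k a => auxConst δ s (r - s) b k *
      (a ^ (2 * (k : ℝ) + δ) * Real.exp (-((s + (r - s)) / (2 * s * (r - s))) * a ^ (2 : ℝ))) with hF
  have hterm := aux_term δ hδ s r hs hsr hr b hb
  have hint : ∀ k, ∫ a in Set.Ioi (0 : ℝ), F k a = P⁻¹ *
      (((2 : ℝ) ^ (δ / 2 - 1) * (r * (1 - r)) ^ (δ / 2))⁻¹ *
      Real.exp (-(Dcoef s r) * b ^ 2 / 2) * (Ccoef δ k * fcoef s r k * b ^ (2 * k))) := by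
    intro k
    rw [← hterm k, inv_mul_cancel_left₀ hP0.ne']
    simp only [hF]
    rw [integral_const_mul]
  have hsum : Summable (fun k : ℕ => Ccoef δ k * fcoef s r k * b ^ (2 * k)) := by
    have := (aux_summable δ hδ ((2 * (r - s))⁻¹ * (s / r) * b ^ 2) (by positivity)).mul_left
      ((2 * (r - s)) ^ ((1 : ℝ) / 2) * (s / r) ^ ((1 : ℝ) / 2))
    refine this.congr fun k => ?_
    rw [mul_assoc (Ccoef δ k), aux_fcoef s r b hs hsr k]
    ring
  have hpw : ∫ a in Set.Ioi (0 : ℝ), a * pFrom0 δ s a * pTrans δ (r - s) a b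
      = ∫ a in Set.Ioi (0 : ℝ), ∑' k, F k a := by
    refine setIntegral_congr_fun measurableSet_Ioi fun a ha => ?_
    exact aux_pointwise δ s (r - s) b a hδ hs ht hb ha
  have hFi : ∀ k, Integrable (F k) (volume.restrict (Set.Ioi (0 : ℝ))) := by
    intro k
    have h := integrableOn_rpow_mul_exp_neg_mul_sq hβ (s := 2 * (k : ℝ) + δ)
      (by linarith [Nat.cast_nonneg (α := ℝ) k])
    have h' := Integrable.const_mul h (auxConst δ s (r - s) b k)
    simpa only [hF, Real.rpow_two] using h'
  have hnorm : ∀ k, ∫ a in Set.Ioi (0 : ℝ), ‖F k a‖ = ∫ a in Set.Ioi (0 : ℝ), F k a := by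
    intro k
    refine setIntegral_congr_fun measurableSet_Ioi fun a ha => ?_
    have ha' : (0 : ℝ) < a := ha
    have g2 : 0 < Real.Gamma ((k : ℝ) + δ / 2) := Real.Gamma_pos_of_pos (by positivity)
    have g3 : 0 < Real.Gamma (δ / 2) := Real.Gamma_pos_of_pos (by positivity)
    refine Real.norm_of_nonneg ?_
    simp only [hF, auxConst]
    positivity
  have hS : Summable (fun k => ∫ a in Set.Ioi (0 : ℝ), ‖F k a‖) := by
    simp only [hnorm, hint]
    exact (hsum.mul_left _).mul_left _
  rw [hpw, ← integral_tsum_of_summable_integral_norm hFi hS]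
  simp only [hint]
  rw [tsum_mul_left, tsum_mul_left, mul_inv_cancel_left₀ hP0.ne']
  rfl
end
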